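/- arXiv:2601.03433 — 8 statements merged into one kernel-verified Lean document; each statement's English description precedes it below -/
import Mathlib

section
/- Let G be a finite simple graph on n ≥ 1 vertices with m edges. Then ∑_{uv ∈ E(G)} d_u d_v ≥ 4m³/n², where the sum runs over the unordered edges uv of G. Moreover, equality holds if and only if G is regular. -/
/-!
By AM-GM, `x * y + a ^ 3 / x + a ^ 3 / y ≥ 3 * a ^ 2`, with equality only for `x = y = a`. Take
`x, y` to be the degrees of the ends of an edge and sum over the `m` edges: a non-isolated vertex
contributes `d_v * (a ^ 3 / d_v) = a ^ 3` to the reciprocal terms, so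
`3 * a ^ 2 * m ≤ ∑_{uv} d_u d_v + a ^ 3 * n` for every `a ≥ 0`. The best choice of `a` is the
average degree `2 * m / n`. In the case of equality every non-isolated vertex has degree `a`, so no
degree exceeds the average, and the graph is regular.
-/

open Finset SimpleGraph
open scoped Classical

/-- The sum of `d_u * d_v` over the (unordered) edges `uv` of `G`, as a real number. -/
noncomputable def edgeDegSum {n : ℕ} (G : SimpleGraph (Fin n)) : ℝ :=
  ∑ e ∈ G.edgeFinset,
    Sym2.lift ⟨fun u v => (G.degree u : ℝ) * (G.degree v : ℝ),
      fun u v => mul_comm _ _⟩ e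

section AMGM

lemma sq_mul_sq_add_cube_mul_inv_sq_sub {s t : ℝ} (hs : s ≠ 0) (ht : t ≠ 0) (a : ℝ) :
    s ^ 2 * t ^ 2 + a ^ 3 * ((s ^ 2)⁻¹ + (t ^ 2)⁻¹) - 3 * a ^ 2 =
      (s * t - a) ^ 2 * (s * t + 2 * a) / (s * t) + a ^ 3 * ((s - t) / (s * t)) ^ 2 := by
  field_simp
  ring

variable {a x y : ℝ}

lemma three_mul_sq_le_mul_add_cube_mul_inv (ha : 0 ≤ a) (hx : 0 < x) (hy : 0 < y) :
    3 * a ^ 2 ≤ x * y + a ^ 3 * (x⁻¹ + y⁻¹) := by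
  obtain ⟨s, hs, rfl⟩ : ∃ s, 0 < s ∧ s ^ 2 = x := ⟨√x, Real.sqrt_pos.2 hx, Real.sq_sqrt hx.le⟩
  obtain ⟨t, ht, rfl⟩ : ∃ t, 0 < t ∧ t ^ 2 = y := ⟨√y, Real.sqrt_pos.2 hy, Real.sq_sqrt hy.le⟩
  rw [← sub_nonneg, sq_mul_sq_add_cube_mul_inv_sq_sub hs.ne' ht.ne']
  positivity

lemma three_mul_sq_eq_mul_add_cube_mul_inv_iff (ha : 0 ≤ a) (hx : 0 < x) (hy : 0 < y) :
    3 * a ^ 2 = x * y + a ^ 3 * (x⁻¹ + y⁻¹) ↔ x = a ∧ y = a := by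
  refine ⟨fun h => ?_, fun ⟨hxa, hya⟩ => ?_⟩
  · obtain ⟨s, hs, rfl⟩ : ∃ s, 0 < s ∧ s ^ 2 = x := ⟨√x, Real.sqrt_pos.2 hx, Real.sq_sqrt hx.le⟩
    obtain ⟨t, ht, rfl⟩ : ∃ t, 0 < t ∧ t ^ 2 = y := ⟨√y, Real.sqrt_pos.2 hy, Real.sq_sqrt hy.le⟩
    rw [eq_comm, ← sub_eq_zero, sq_mul_sq_add_cube_mul_inv_sq_sub hs.ne' ht.ne',
      add_eq_zero_iff_of_nonneg (by positivity) (by positivity)] at h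
    have hsum : s * t + 2 * a ≠ 0 := by positivity
    have hprod : s * t = a := by simpa [hsum, hs.ne', ht.ne', sub_eq_zero] using h.1
    have hapos : 0 < a := hprod ▸ mul_pos hs ht
    have hst : s = t := by simpa [hapos.ne', hs.ne', ht.ne', sub_eq_zero] using h.2
    subst hst
    exact ⟨by rw [sq, hprod], by rw [sq, hprod]⟩
  · subst hxa hya
    field_simp
    ring

end AMGM

lemma four_mul_cube_div_sq_eq (m n : ℝ) :
    4 * m ^ 3 / n ^ 2 = m * (3 * (2 * m / n) ^ 2) - (2 * m / n) ^ 3 * n := by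
  field_simp
  ring

section EdgeSums

variable {V : Type*} [Fintype V] (G : SimpleGraph V) [DecidableRel G.Adj]

lemma sum_edgeFinset_sum_toFinset [DecidableEq V] {M : Type*} [AddCommMonoid M] (f : V → M) :
    ∑ e ∈ G.edgeFinset, ∑ v ∈ e.toFinset, f v = ∑ v, G.degree v • f v := by
  have mem_iff (e : Sym2 V) (v : V) :
      e ∈ G.edgeFinset ∧ v ∈ e.toFinset ↔ e ∈ G.incidenceFinset v ∧ v ∈ univ := by
    rw [G.incidenceFinset_eq_filter, mem_filter, Sym2.mem_toFinset, and_iff_left (mem_univ v)]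
  rw [Finset.sum_comm' mem_iff]
  simp only [sum_const, card_incidenceFinset_eq_degree]

lemma sum_edgeFinset_sum_inv_degree_le_card [DecidableEq V] :
    ∑ e ∈ G.edgeFinset, ∑ v ∈ e.toFinset, (G.degree v : ℝ)⁻¹ ≤ Fintype.card V := by
  rw [sum_edgeFinset_sum_toFinset, ← Finset.card_univ, ← nsmul_one (#univ : ℕ)]
  refine Finset.sum_le_card_nsmul _ _ _ fun v _ => ?_
  rw [nsmul_eq_mul]
  exact mul_inv_le_one

lemma sum_degree_eq_sum_average [Nonempty V] :
    ∑ v, (G.degree v : ℝ) = ∑ _v : V, 2 * (#G.edgeFinset : ℝ) / Fintype.card V := by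
  rw [sum_const, card_univ, nsmul_eq_mul, mul_div_cancel₀ _ (by positivity)]
  exact_mod_cast G.sum_degrees_eq_twice_card_edges

end EdgeSums

/-- The second Zagreb index of `G`: the sum of `d_u * d_v` over the edges `uv`. This is the analogue
of `edgeDegSum` for an arbitrary finite vertex type, with values in `ℕ`. -/
def secondZagrebIndex {V : Type*} [Fintype V] (G : SimpleGraph V) [DecidableRel G.Adj] : ℕ :=
  ∑ e ∈ G.edgeFinset, (e.map fun v => G.degree v).mul

lemma edgeDegSum_eq_secondZagrebIndex {n : ℕ} (G : SimpleGraph (Fin n)) :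
    edgeDegSum G = secondZagrebIndex G := by
  rw [edgeDegSum, secondZagrebIndex, Nat.cast_sum]
  refine Finset.sum_congr rfl fun e _ => ?_
  induction e with
  | h u v => simp only [Sym2.lift_mk, Sym2.map_mk, Sym2.mul_mk, Nat.cast_mul]

section SecondZagrebIndex

variable {V : Type*} [Fintype V] {G : SimpleGraph V} [DecidableRel G.Adj] {a : ℝ}

lemma secondZagrebIndex_of_isRegularOfDegree {d : ℕ} (hd : G.IsRegularOfDegree d) :
    secondZagrebIndex G = #G.edgeFinset * d ^ 2 := by
  rw [secondZagrebIndex, ← smul_eq_mul, ← Finset.sum_const]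
  refine Finset.sum_congr rfl fun e _ => ?_
  induction e with
  | h u v => rw [Sym2.map_mk, Sym2.mul_mk, hd.degree_eq, hd.degree_eq, sq]

lemma three_mul_sq_le_mul_degree_add_inv_degree [DecidableEq V] (ha : 0 ≤ a) {e : Sym2 V}
    (he : e ∈ G.edgeFinset) :
    3 * a ^ 2 ≤
      ((e.map fun v => G.degree v).mul : ℕ) + a ^ 3 * ∑ v ∈ e.toFinset, (G.degree v : ℝ)⁻¹ := by
  induction e with
  | h u v =>
    have hadj : G.Adj u v := mem_edgeFinset.1 he
    rw [Sym2.toFinset_mk_eq, sum_pair hadj.ne, Sym2.map_mk, Sym2.mul_mk, Nat.cast_mul]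
    exact three_mul_sq_le_mul_add_cube_mul_inv ha (mod_cast hadj.degree_pos_left)
      (mod_cast hadj.degree_pos_right)

lemma sum_mul_degree_add_inv_degree_le [DecidableEq V] (ha : 0 ≤ a) :
    ∑ e ∈ G.edgeFinset,
        (((e.map fun v => G.degree v).mul : ℕ) + a ^ 3 * ∑ v ∈ e.toFinset, (G.degree v : ℝ)⁻¹) ≤
      secondZagrebIndex G + a ^ 3 * Fintype.card V := by
  rw [sum_add_distrib, ← mul_sum, secondZagrebIndex, Nat.cast_sum]
  gcongr
  exact sum_edgeFinset_sum_inv_degree_le_card G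

variable (G) in
lemma three_mul_sq_mul_card_edgeFinset_le (ha : 0 ≤ a) :
    #G.edgeFinset * (3 * a ^ 2) ≤ secondZagrebIndex G + a ^ 3 * Fintype.card V := by
  classical
  rw [← nsmul_eq_mul]
  exact (Finset.card_nsmul_le_sum _ _ _ fun _ he =>
    three_mul_sq_le_mul_degree_add_inv_degree ha he).trans (sum_mul_degree_add_inv_degree_le ha)

lemma degree_eq_of_adj_of_card_edgeFinset_mul_eq (ha : 0 ≤ a)
    (h : #G.edgeFinset * (3 * a ^ 2) = secondZagrebIndex G + a ^ 3 * Fintype.card V)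
    {u v : V} (huv : G.Adj u v) : (G.degree u : ℝ) = a := by
  classical
  have edge_le := fun e (he : e ∈ G.edgeFinset) => three_mul_sq_le_mul_degree_add_inv_degree ha he
  have sum_eq := (Finset.sum_le_sum edge_le).antisymm <| by
    rw [sum_const, nsmul_eq_mul, h]
    exact sum_mul_degree_add_inv_degree_le ha
  have edge_eq := (Finset.sum_eq_sum_iff_of_le edge_le).1 sum_eq s(u, v) (mem_edgeFinset.2 huv)
  rw [Sym2.toFinset_mk_eq, sum_pair huv.ne, Sym2.map_mk, Sym2.mul_mk, Nat.cast_mul] at edge_eq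
  exact ((three_mul_sq_eq_mul_add_cube_mul_inv_iff ha (mod_cast huv.degree_pos_left)
    (mod_cast huv.degree_pos_right)).1 edge_eq).1

lemma degree_le_of_card_edgeFinset_mul_eq (ha : 0 ≤ a)
    (h : #G.edgeFinset * (3 * a ^ 2) = secondZagrebIndex G + a ^ 3 * Fintype.card V) (v : V) :
    (G.degree v : ℝ) ≤ a := by
  rcases (G.degree v).eq_zero_or_pos with hv | hv
  · rwa [hv, Nat.cast_zero]
  · obtain ⟨w, hvw⟩ := (G.degree_pos_iff_exists_adj v).1 hv
    exact (degree_eq_of_adj_of_card_edgeFinset_mul_eq ha h hvw).le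

variable [Nonempty V]

lemma secondZagrebIndex_eq_four_mul_cube_div_sq {d : ℕ} (hd : G.IsRegularOfDegree d) :
    (secondZagrebIndex G : ℝ) = 4 * (#G.edgeFinset : ℝ) ^ 3 / (Fintype.card V : ℝ) ^ 2 := by
  have hdegree : (d : ℝ) = 2 * #G.edgeFinset / Fintype.card V := by
    have hsum := sum_degree_eq_sum_average G
    simp only [hd.degree_eq, sum_const] at hsum
    exact nsmul_right_injective Fintype.card_ne_zero hsum
  rw [secondZagrebIndex_of_isRegularOfDegree hd, Nat.cast_mul, Nat.cast_pow, hdegree]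
  ring

lemma exists_isRegularOfDegree_of_forall_degree_le_average
    (h : ∀ v, (G.degree v : ℝ) ≤ 2 * #G.edgeFinset / Fintype.card V) :
    ∃ d, G.IsRegularOfDegree d := by
  have hall := (Finset.sum_eq_sum_iff_of_le fun v _ => h v).1 (sum_degree_eq_sum_average G)
  obtain ⟨v₀⟩ := ‹Nonempty V›
  refine ⟨G.degree v₀, fun v => ?_⟩
  exact_mod_cast (hall v (mem_univ v)).trans (hall v₀ (mem_univ v₀)).symm

end SecondZagrebIndex

theorem stmt_0_general {V : Type*} [Fintype V] [Nonempty V] (G : SimpleGraph V)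
    [DecidableRel G.Adj] :
    4 * (#G.edgeFinset : ℝ) ^ 3 / (Fintype.card V : ℝ) ^ 2 ≤ secondZagrebIndex G ∧
    ((secondZagrebIndex G : ℝ) = 4 * (#G.edgeFinset : ℝ) ^ 3 / (Fintype.card V : ℝ) ^ 2 ↔
      ∃ d, G.IsRegularOfDegree d) := by
  have ha : (0 : ℝ) ≤ 2 * #G.edgeFinset / Fintype.card V := by positivity
  refine ⟨?_, fun h => ?_, fun ⟨d, hd⟩ => ?_⟩
  · rw [four_mul_cube_div_sq_eq, sub_le_iff_le_add]
    exact three_mul_sq_mul_card_edgeFinset_le G ha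
  · rw [four_mul_cube_div_sq_eq, eq_sub_iff_add_eq] at h
    exact exists_isRegularOfDegree_of_forall_degree_le_average
      (degree_le_of_card_edgeFinset_mul_eq ha h.symm)
  · exact secondZagrebIndex_eq_four_mul_cube_div_sq hd

/-- **Nikiforov's inequality.**  For a graph `G` on `n ≥ 1` vertices with `m` edges,
`∑_{uv ∈ E} d_u d_v ≥ 4 m³ / n²`, with equality iff `G` is regular. -/
theorem stmt_0 (n : ℕ) (hn : 1 ≤ n) (G : SimpleGraph (Fin n))
    (m : ℕ) (hm : G.edgeFinset.card = m) :
    4 * (m : ℝ) ^ 3 / (n : ℝ) ^ 2 ≤ edgeDegSum G ∧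
    (edgeDegSum G = 4 * (m : ℝ) ^ 3 / (n : ℝ) ^ 2 ↔ ∃ d, G.IsRegularOfDegree d) := by
  subst hm
  have : Nonempty (Fin n) := ⟨⟨0, hn⟩⟩
  simpa only [edgeDegSum_eq_secondZagrebIndex, Fintype.card_fin] using stmt_0_general G
end

section
/- Let G be a finite simple graph on n ≥ 1 vertices with m edges. Then ∑_{ {u,v} ∉ E(G), u ≠ v } d_u d_v ≤ 2m² − 2m²/n − 4m³/n², where the sum runs over unordered pairs of distinct non-adjacent vertices. Moreover, equality holds if and only if G is regular. -/
open Finset SimpleGraph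
open scoped Classical

/-- The sum of `d_u * d_v` over unordered pairs `{u,v}` of distinct non-adjacent
vertices of `G`, as a real number. -/
noncomputable def nonEdgeDegSum {n : ℕ} (G : SimpleGraph (Fin n)) : ℝ :=
  ∑ e ∈ (Finset.univ : Finset (Sym2 (Fin n))).filter
      (fun e => ¬ e.IsDiag ∧ e ∉ G.edgeFinset),
    Sym2.lift ⟨fun u v => (G.degree u : ℝ) * (G.degree v : ℝ),
      fun _ _ => mul_comm _ _⟩ e

/-!
Expanding `(∑ d_v)²`, the sum over non-adjacent pairs is
`((∑ d_v)² - ∑ d_v² - ∑_{(u, v) adjacent} d_u d_v) / 2`, the last sum being over ordered pairs.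
Cauchy–Schwarz bounds `∑ d_v²` below by `(2m)² / n`, with equality exactly for regular graphs.
For the last sum, put `c = 2m / n`: AM-GM gives `3c² ≤ d_u d_v + c³ / d_u + c³ / d_v` on every edge,
and since `∑_{(u, v) adjacent} 1 / d_u ≤ n`, summation yields `∑ d_u d_v ≥ n c³ = (2m)³ / n²`.
The same argument works for any symmetric nonnegative matrix in place of the adjacency matrix.
-/

open Matrix

section Inequalities

variable {ι R K : Type*} [Field K] [LinearOrder K] [IsStrictOrderedRing K]

lemma twentySeven_mul_mul_mul_le_add_add_pow_three {x y z : K}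
    (hx : 0 ≤ x) (hy : 0 ≤ y) (hz : 0 ≤ z) :
    27 * (x * y * z) ≤ (x + y + z) ^ 3 := by
  have key : (x + y + z) ^ 3 - 27 * (x * y * z) =
      (x + y + z) * ((x - y) ^ 2 + (y - z) ^ 2 + (z - x) ^ 2) / 2 +
        3 * (x * (y - z) ^ 2 + y * (z - x) ^ 2 + z * (x - y) ^ 2) := by ring
  rw [← sub_nonneg, key]
  positivity

lemma three_mul_sq_le_mul_add_div_add_div {a b c : K} (ha : 0 < a) (hb : 0 < b) (hc : 0 ≤ c) :
    3 * c ^ 2 ≤ a * b + c ^ 3 / a + c ^ 3 / b := by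
  refine le_of_pow_le_pow_left₀ three_ne_zero (by positivity) ?_
  calc (3 * c ^ 2) ^ 3 = 27 * (a * b * (c ^ 3 / a) * (c ^ 3 / b)) := by
        field_simp
        ring
    _ ≤ (a * b + c ^ 3 / a + c ^ 3 / b) ^ 3 :=
      twentySeven_mul_mul_mul_le_add_add_pow_three (by positivity) (by positivity) (by positivity)

lemma sum_sum_sub_sq [CommRing R] (s : Finset ι) (f : ι → R) :
    ∑ i ∈ s, ∑ j ∈ s, (f i - f j) ^ 2 = 2 * (#s * ∑ i ∈ s, f i ^ 2 - (∑ i ∈ s, f i) ^ 2) := by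
  simp only [sub_sq, sum_add_distrib, sum_sub_distrib, sum_const, nsmul_eq_mul, ← mul_sum,
    ← sum_mul]
  ring

lemma sq_sum_eq_card_mul_sum_sq_iff [CommRing R] [LinearOrder R] [IsStrictOrderedRing R]
    {s : Finset ι} {f : ι → R} :
    (∑ i ∈ s, f i) ^ 2 = #s * ∑ i ∈ s, f i ^ 2 ↔ ∀ i ∈ s, ∀ j ∈ s, f i = f j := by
  have iff_sum_sub_sq_eq_zero : (∑ i ∈ s, f i) ^ 2 = #s * ∑ i ∈ s, f i ^ 2 ↔
      ∑ i ∈ s, ∑ j ∈ s, (f i - f j) ^ 2 = 0 := by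
    rw [sum_sum_sub_sq, mul_eq_zero_iff_left two_ne_zero, sub_eq_zero, eq_comm]
  rw [iff_sum_sub_sq_eq_zero, sum_eq_zero_iff_of_nonneg fun i _ ↦ sum_nonneg fun j _ ↦ sq_nonneg _]
  refine forall₂_congr fun i _ ↦ ?_
  rw [sum_eq_zero_iff_of_nonneg fun j _ ↦ sq_nonneg _]
  simp only [sq_eq_zero_iff, sub_eq_zero]

end Inequalities

section NonnegMatrix

variable {ι κ K : Type*} [Fintype ι] [Fintype κ]
variable [Field K] [LinearOrder K] [IsStrictOrderedRing K] {M : Matrix ι ι K}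

lemma sum_sum_mul_div_rowSum_le_card_mul (N : Matrix ι κ K) {c : K} (hc : 0 ≤ c) :
    ∑ i, ∑ j, N i j * (c / ∑ k, N i k) ≤ Fintype.card ι * c := by
  calc ∑ i, ∑ j, N i j * (c / ∑ k, N i k) = ∑ i, (∑ k, N i k) * (c / ∑ k, N i k) := by
        simp only [← sum_mul]
    -- A zero row contributes `0` because `c / 0 = 0`.
    _ ≤ ∑ _i : ι, c := sum_le_sum fun i _ ↦ by
        rcases eq_or_ne (∑ k, N i k) 0 with h | h
        · rwa [h, zero_mul]
        · exact (mul_div_cancel₀ c h).le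
    _ = Fintype.card ι * c := by rw [sum_const, card_univ, nsmul_eq_mul]

lemma three_mul_sq_mul_sum_le (hM : M.IsSymm) (hM₀ : ∀ i j, 0 ≤ M i j) {c : K} (hc : 0 ≤ c) :
    3 * c ^ 2 * ∑ i, ∑ j, M i j ≤
      ∑ i, ∑ j, M i j * ((∑ k, M i k) * ∑ k, M j k) + 2 * (Fintype.card ι * c ^ 3) := by
  set r : ι → K := fun i ↦ ∑ k, M i k
  have r_pos {i j : ι} (hij : 0 < M i j) : 0 < r i :=
    sum_pos' (fun k _ ↦ hM₀ i k) ⟨j, mem_univ j, hij⟩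
  have entrywise (i j : ι) :
      3 * c ^ 2 * M i j ≤
        M i j * (r i * r j) + M i j * (c ^ 3 / r i) + M i j * (c ^ 3 / r j) := by
    rcases (hM₀ i j).eq_or_lt' with hij | hij
    · simp [hij]
    · have am_gm := three_mul_sq_le_mul_add_div_add_div (r_pos hij) (r_pos (hM.apply i j ▸ hij)) hc
      linarith [mul_le_mul_of_nonneg_left am_gm hij.le]
  have swap : ∑ i, ∑ j, M i j * (c ^ 3 / r j) = ∑ i, ∑ j, M i j * (c ^ 3 / r i) := by
    rw [sum_comm]
    simp only [hM.apply]
  have row_bound : ∑ i, ∑ j, M i j * (c ^ 3 / r i) ≤ Fintype.card ι * c ^ 3 :=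
    sum_sum_mul_div_rowSum_le_card_mul M (by positivity)
  calc 3 * c ^ 2 * ∑ i, ∑ j, M i j
      ≤ ∑ i, ∑ j, (M i j * (r i * r j) + M i j * (c ^ 3 / r i) + M i j * (c ^ 3 / r j)) := by
        simp only [mul_sum]
        exact sum_le_sum fun i _ ↦ sum_le_sum fun j _ ↦ entrywise i j
    _ ≤ ∑ i, ∑ j, M i j * (r i * r j) + 2 * (Fintype.card ι * c ^ 3) := by
        simp only [sum_add_distrib, swap]
        linarith

theorem pow_three_sum_le_card_sq_mul_sum (hM : M.IsSymm) (hM₀ : ∀ i j, 0 ≤ M i j) :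
    (∑ i, ∑ j, M i j) ^ 3 ≤
      (Fintype.card ι : K) ^ 2 * ∑ i, ∑ j, M i j * ((∑ k, M i k) * ∑ k, M j k) := by
  set S := ∑ i, ∑ j, M i j with hS
  set n := (Fintype.card ι : K)
  set c := S / n
  have S_nonneg : 0 ≤ S := sum_nonneg fun i _ ↦ sum_nonneg fun j _ ↦ hM₀ i j
  have card_mul_average : n * c = S := mul_div_cancel_of_imp' fun h ↦ by
    have : IsEmpty ι := Fintype.card_eq_zero_iff.1 (Nat.cast_eq_zero.1 h)
    simp [hS]
  have scaled := mul_le_mul_of_nonneg_left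
    (three_mul_sq_mul_sum_le hM hM₀ (c := c) (by positivity)) (sq_nonneg n)
  have left_eq : n ^ 2 * (3 * c ^ 2 * S) = 3 * S ^ 3 := by
    linear_combination 3 * S * (n * c + S) * card_mul_average
  have right_eq : n ^ 2 * (n * c ^ 3) = S ^ 3 := by
    rw [← card_mul_average]
    ring
  linarith

end NonnegMatrix

section Graph

variable {V R : Type*} [Fintype V] (G : SimpleGraph V) [DecidableRel G.Adj]

lemma sum_dart_edge [AddCommMonoid R] (f : Sym2 V → R) :
    ∑ d : G.Dart, f d.edge = 2 • ∑ e ∈ G.edgeFinset, f e := by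
  classical
  rw [← sum_fiberwise_of_maps_to (g := Dart.edge) (t := G.edgeFinset)
    fun d _ ↦ mem_edgeFinset.2 d.edge_mem, ← sum_nsmul]
  refine sum_congr rfl fun e he ↦ ?_
  rw [sum_congr rfl fun d hd ↦ congrArg f (mem_filter.1 hd).2, sum_const,
    G.dart_edge_fiber_card e (mem_edgeFinset.1 he)]

lemma sum_dart_eq_sum_sum_ite [AddCommMonoid R] (f : V → V → R) :
    ∑ d : G.Dart, f d.fst d.snd = ∑ u, ∑ v, if G.Adj u v then f u v else 0 := by
  rw [← sum_product', univ_product_univ, ← sum_filter]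
  exact sum_bij' (fun d _ ↦ d.toProd) (fun p hp ↦ ⟨p, (mem_filter.1 hp).2⟩)
    (by simp) (by simp) (by simp) (by simp) (by simp)

lemma dotProduct_adjMatrix_mulVec_self [CommSemiring R] (x : V → R) :
    x ⬝ᵥ G.adjMatrix R *ᵥ x = 2 * ∑ e ∈ G.edgeFinset, (e.map x).mul := by
  rw [dotProduct_mulVec_adjMatrix, ← sum_dart_eq_sum_sum_ite G fun u v ↦ x u * x v, two_mul,
    ← two_nsmul, ← sum_dart_edge]
  rfl

lemma sq_sum_eq_dotProduct_add_adjMatrix_add_compl [DecidableEq V] [CommSemiring R] (x : V → R) :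
    (∑ v, x v) ^ 2 =
      x ⬝ᵥ x + x ⬝ᵥ G.adjMatrix R *ᵥ x + x ⬝ᵥ Gᶜ.adjMatrix R *ᵥ x := by
  have : x ⬝ᵥ x = ∑ u, ∑ v, if u = v then x u * x v else 0 := by simp [dotProduct]
  rw [this]
  simp only [dotProduct_mulVec_adjMatrix, ← sum_add_distrib, sq, sum_mul_sum]
  refine sum_congr rfl fun u _ ↦ sum_congr rfl fun v _ ↦ ?_
  by_cases huv : u = v <;> by_cases hadj : G.Adj u v <;> simp_all [compl_adj]

lemma sum_cast_degree [NonAssocSemiring R] : ∑ v, (G.degree v : R) = 2 * #G.edgeFinset := by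
  exact_mod_cast congrArg (Nat.cast : ℕ → R) G.sum_degrees_eq_twice_card_edges

lemma pow_three_sum_degree_le :
    (∑ v, (G.degree v : ℝ)) ^ 3 ≤ (Fintype.card V : ℝ) ^ 2 *
      ((G.degree · : V → ℝ) ⬝ᵥ G.adjMatrix ℝ *ᵥ (G.degree · : V → ℝ)) := by
  have row_sum (u : V) : ∑ v, G.adjMatrix ℝ u v = G.degree u := by
    simp [adjMatrix_apply, ← neighborFinset_eq_filter]
  have := pow_three_sum_le_card_sq_mul_sum (M := G.adjMatrix ℝ) G.isSymm_adjMatrix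
    fun u v ↦ by rw [adjMatrix_apply]; positivity
  simp only [row_sum] at this
  simpa only [dotProduct_mulVec_adjMatrix, adjMatrix_apply, ite_mul, one_mul,
    zero_mul] using this

lemma pow_three_sum_degree_eq_of_isRegularOfDegree {d : ℕ} (hG : G.IsRegularOfDegree d) :
    (∑ v, (G.degree v : ℝ)) ^ 3 = (Fintype.card V : ℝ) ^ 2 *
      ((G.degree · : V → ℝ) ⬝ᵥ G.adjMatrix ℝ *ᵥ (G.degree · : V → ℝ)) := by
  simp only [hG.degree_eq, dotProduct, adjMatrix_mulVec_apply, sum_const, card_univ,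
    card_neighborFinset_eq_degree, nsmul_eq_mul]
  ring

lemma sq_sum_degree_eq_card_mul_sum_sq_iff [Nonempty V] :
    (∑ v, (G.degree v : ℝ)) ^ 2 = Fintype.card V * ∑ v, (G.degree v : ℝ) ^ 2 ↔
      ∃ d, G.IsRegularOfDegree d := by
  rw [← card_univ, sq_sum_eq_card_mul_sum_sq_iff]
  simp only [mem_univ, forall_const, Nat.cast_inj]
  exact ⟨fun h ↦ ⟨G.degree (Classical.arbitrary V), fun v ↦ h v _⟩,
    fun ⟨_, hd⟩ u v ↦ (hd u).trans (hd v).symm⟩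

/-- The second Zagreb coindex: the sum of `d_u * d_v` over the unordered pairs of distinct
non-adjacent vertices, encoded as the edges of the complement of `G`. -/
noncomputable def secondZagrebCoindex [DecidableEq V] : ℝ :=
  ∑ e ∈ Gᶜ.edgeFinset, (e.map (G.degree · : V → ℝ)).mul

lemma two_mul_secondZagrebCoindex [DecidableEq V] :
    2 * secondZagrebCoindex G = (∑ v, (G.degree v : ℝ)) ^ 2 - ∑ v, (G.degree v : ℝ) ^ 2 -
      (G.degree · : V → ℝ) ⬝ᵥ G.adjMatrix ℝ *ᵥ (G.degree · : V → ℝ) := by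
  rw [sq_sum_eq_dotProduct_add_adjMatrix_add_compl G, dotProduct_adjMatrix_mulVec_self Gᶜ,
    secondZagrebCoindex]
  simp only [dotProduct, sq]
  ring

theorem stmt_1_general [DecidableEq V] [Nonempty V] (m : ℕ) (hm : #G.edgeFinset = m) :
    secondZagrebCoindex G ≤ 2 * (m : ℝ) ^ 2 - 2 * (m : ℝ) ^ 2 / (Fintype.card V : ℝ) -
      4 * (m : ℝ) ^ 3 / (Fintype.card V : ℝ) ^ 2 ∧
    (secondZagrebCoindex G = 2 * (m : ℝ) ^ 2 - 2 * (m : ℝ) ^ 2 / (Fintype.card V : ℝ) -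
      4 * (m : ℝ) ^ 3 / (Fintype.card V : ℝ) ^ 2 ↔ ∃ d, G.IsRegularOfDegree d) := by
  set n := (Fintype.card V : ℝ)
  set D := ∑ v, (G.degree v : ℝ)
  set Q := ∑ v, (G.degree v : ℝ) ^ 2
  set W := (G.degree · : V → ℝ) ⬝ᵥ G.adjMatrix ℝ *ᵥ (G.degree · : V → ℝ)
  have n_pos : 0 < n := Nat.cast_pos.2 Fintype.card_pos
  have D_eq : D = 2 * m := hm ▸ sum_cast_degree G
  have bound_eq : 2 * (m : ℝ) ^ 2 - 2 * (m : ℝ) ^ 2 / n - 4 * (m : ℝ) ^ 3 / n ^ 2 =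
      (D ^ 2 - D ^ 2 / n - D ^ 3 / n ^ 2) / 2 := by rw [D_eq]; ring
  have coindex_eq : 2 * secondZagrebCoindex G = D ^ 2 - Q - W := two_mul_secondZagrebCoindex G
  have Q_ge : D ^ 2 / n ≤ Q := (div_le_iff₀' n_pos).2 sq_sum_le_card_mul_sum_sq
  have W_ge : D ^ 3 / n ^ 2 ≤ W := (div_le_iff₀' (by positivity)).2 (pow_three_sum_degree_le G)
  have Q_eq_iff : D ^ 2 / n = Q ↔ ∃ d, G.IsRegularOfDegree d := by
    rw [div_eq_iff n_pos.ne', mul_comm]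
    exact sq_sum_degree_eq_card_mul_sum_sq_iff G
  have W_eq {d : ℕ} (hd : G.IsRegularOfDegree d) : D ^ 3 / n ^ 2 = W := by
    rw [div_eq_iff (by positivity), mul_comm]
    exact pow_three_sum_degree_eq_of_isRegularOfDegree G hd
  rw [bound_eq]
  refine ⟨by linarith, fun h ↦ Q_eq_iff.1 (by linarith), fun ⟨d, hd⟩ ↦ ?_⟩
  linarith [Q_eq_iff.2 ⟨d, hd⟩, W_eq hd]

end Graph

lemma nonEdgeDegSum_eq_secondZagrebCoindex {n : ℕ} (G : SimpleGraph (Fin n)) :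
    nonEdgeDegSum G = secondZagrebCoindex G := by
  refine sum_congr ?_ fun e _ ↦ ?_
  · ext e
    induction e with | _ u v => simp [compl_adj]
  · induction e with | _ u v => rfl

/-- For a graph `G` on `n ≥ 1` vertices with `m` edges,
`∑_{uv ∉ E, u ≠ v} d_u d_v ≤ 2m² − 2m²/n − 4m³/n²`, with equality iff `G` is regular. -/
theorem stmt_1 (n : ℕ) (hn : 1 ≤ n) (G : SimpleGraph (Fin n))
    (m : ℕ) (hm : G.edgeFinset.card = m) :
    nonEdgeDegSum G ≤
      2 * (m : ℝ) ^ 2 - 2 * (m : ℝ) ^ 2 / (n : ℝ) - 4 * (m : ℝ) ^ 3 / (n : ℝ) ^ 2 ∧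
    (nonEdgeDegSum G =
      2 * (m : ℝ) ^ 2 - 2 * (m : ℝ) ^ 2 / (n : ℝ) - 4 * (m : ℝ) ^ 3 / (n : ℝ) ^ 2 ↔
      ∃ d, G.IsRegularOfDegree d) := by
  have : NeZero n := ⟨Nat.one_le_iff_ne_zero.1 hn⟩
  simpa only [nonEdgeDegSum_eq_secondZagrebCoindex, Fintype.card_fin] using
    stmt_1_general G m hm
end

section
/- Let G be a finite simple graph on n ≥ 1 vertices with m edges. Then A(G) ≤ 4m² − 4m²/n − 8m³/n² − 2·t(G). -/
open Finset SimpleGraph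
open scoped Classical

/-- `A G` is the number of ordered quadruples `(u,v,w,x)` of pairwise distinct vertices
with `uv`, `wx` edges and `vw` a non-edge (ordered alternating 3-edge paths). -/
noncomputable def A {n : ℕ} (G : SimpleGraph (Fin n)) : ℕ :=
  Finset.card <| (Finset.univ : Finset (Fin n × Fin n × Fin n × Fin n)).filter
    fun p =>
      p.1 ≠ p.2.1 ∧ p.1 ≠ p.2.2.1 ∧ p.1 ≠ p.2.2.2 ∧
      p.2.1 ≠ p.2.2.1 ∧ p.2.1 ≠ p.2.2.2 ∧ p.2.2.1 ≠ p.2.2.2 ∧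
      G.Adj p.1 p.2.1 ∧ G.Adj p.2.2.1 p.2.2.2 ∧ ¬ G.Adj p.2.1 p.2.2.1

/-- `t G` is the number of 3-element vertex subsets of `G` spanning exactly two edges. -/
noncomputable def t {n : ℕ} (G : SimpleGraph (Fin n)) : ℕ :=
  Finset.card <| (Finset.powersetCard 3 (Finset.univ : Finset (Fin n))).filter
    fun S => (G.edgeFinset.filter fun e => ∀ v ∈ e, v ∈ S).card = 2

/-!
Count the `(2m)²` ordered pairs of darts `u → v`, `w → x` by the position of `v` and `w`. The pairs
with `v = w` contribute `∑ d(v)²`, those with `vw` an edge contribute `∑ d(v) d(w)` over ordered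
adjacent pairs, and those with `vw` a non-edge of distinct vertices are the quadruples counted by
`A G`, together with the degenerate ones `u = x`, which are the induced two-edge paths, two for each
set counted by `t G`. Hence `A G + 2 t G + ∑ d(v)² + ∑ d(v) d(w) = 4m²`. The third term is at least
`4m² / n` by Cauchy–Schwarz. The fourth counts walks with three edges and is at least `8m³ / n²`:
for each dart take `3 ≤ xy + 1/x + 1/y` with `x` and `y` the degrees of its ends divided by the
average degree, and sum. This last argument works for every nonnegative matrix.
-/

section NonnegMatrix

variable {𝕜 : Type*} [Field 𝕜] [LinearOrder 𝕜] [IsStrictOrderedRing 𝕜]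

lemma three_le_mul_add_inv_add_inv {x y : 𝕜} (hx : 0 < x) (hy : 0 < y) :
    3 ≤ x * y + x⁻¹ + y⁻¹ := by
  have key : 0 ≤ (x * y) ^ 2 + x + y - 3 * (x * y) := by
    rcases le_total (4 * y) 1 with hy4 | hy4
    · nlinarith [mul_pos hx hy, sq_nonneg (x * y)]
    -- Complete the square in `x`.
    · refine nonneg_of_mul_nonneg_right (a := 4 * y ^ 2) ?_ (by positivity)
      calc 0 ≤ (2 * y ^ 2 * x + (1 - 3 * y)) ^ 2 + (4 * y - 1) * (y - 1) ^ 2 :=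
            add_nonneg (sq_nonneg _) (mul_nonneg (sub_nonneg.2 hy4) (sq_nonneg _))
        _ = 4 * y ^ 2 * ((x * y) ^ 2 + x + y - 3 * (x * y)) := by ring
  have hdiff : x * y + x⁻¹ + y⁻¹ - 3 = ((x * y) ^ 2 + x + y - 3 * (x * y)) / (x * y) := by
    field_simp
    ring
  exact sub_nonneg.1 (hdiff ▸ div_nonneg key (mul_pos hx hy).le)

variable {α β : Type*} [Fintype α] [Fintype β]

lemma sum_sum_div_row_sum_le_card (f : α → β → 𝕜) :
    ∑ i, ∑ j, f i j / ∑ j', f i j' ≤ Fintype.card α := by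
  simp_rw [← sum_div]
  simpa using sum_le_sum fun i (_ : i ∈ univ) ↦ div_self_le_one (∑ j, f i j)

lemma sum_sum_div_col_sum_le_card (f : α → β → 𝕜) :
    ∑ i, ∑ j, f i j / ∑ i', f i' j ≤ Fintype.card β := by
  rw [sum_comm]
  exact sum_sum_div_row_sum_le_card fun j i ↦ f i j

lemma three_mul_sum_le_mul_mul_sum_add_card_div_add_card_div {f : α → β → 𝕜}
    (hf : ∀ i j, 0 ≤ f i j) {p q : 𝕜} (hp : 0 < p) (hq : 0 < q) :
    3 * ∑ i, ∑ j, f i j ≤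
      p * q * ∑ i, ∑ j, f i j * ((∑ j', f i j') * ∑ i', f i' j) +
        Fintype.card α / p + Fintype.card β / q := by
  have hentry i j : 3 * f i j ≤ p * q * (f i j * ((∑ j', f i j') * ∑ i', f i' j)) +
      f i j / (∑ j', f i j') / p + f i j / (∑ i', f i' j) / q := by
    rcases (hf i j).eq_or_lt with h0 | h0
    · simp [← h0]
    have hrow : 0 < ∑ j', f i j' := h0.trans_le (single_le_sum (fun j _ ↦ hf i j) (mem_univ j))
    have hcol : 0 < ∑ i', f i' j :=
      h0.trans_le (single_le_sum (f := fun i ↦ f i j) (fun i _ ↦ hf i j) (mem_univ i))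
    convert mul_le_mul_of_nonneg_right
      (three_le_mul_add_inv_add_inv (mul_pos hp hrow) (mul_pos hq hcol)) h0.le using 1
    field_simp
  calc 3 * ∑ i, ∑ j, f i j
    _ ≤ p * q * ∑ i, ∑ j, f i j * ((∑ j', f i j') * ∑ i', f i' j) +
          (∑ i, ∑ j, f i j / ∑ j', f i j') / p + (∑ i, ∑ j, f i j / ∑ i', f i' j) / q := by
        simpa only [mul_sum, sum_div, sum_add_distrib] using
          sum_le_sum fun i (_ : i ∈ univ) ↦ sum_le_sum fun j (_ : j ∈ univ) ↦ hentry i j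
    _ ≤ _ := by
        gcongr
        · exact sum_sum_div_row_sum_le_card f
        · exact sum_sum_div_col_sum_le_card f

lemma sum_pow_three_le_card_mul_card_mul_sum {f : α → β → 𝕜} (hf : ∀ i j, 0 ≤ f i j) :
    (∑ i, ∑ j, f i j) ^ 3 ≤ Fintype.card α * Fintype.card β *
      ∑ i, ∑ j, f i j * ((∑ j', f i j') * ∑ i', f i' j) := by
  have hT : 0 ≤ ∑ i, ∑ j, f i j := sum_nonneg fun i _ ↦ sum_nonneg fun j _ ↦ hf i j
  have hW : 0 ≤ ∑ i, ∑ j, f i j * ((∑ j', f i j') * ∑ i', f i' j) :=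
    sum_nonneg fun i _ ↦ sum_nonneg fun j _ ↦
      mul_nonneg (hf i j) (mul_nonneg (sum_nonneg fun j _ ↦ hf i j) (sum_nonneg fun i _ ↦ hf i j))
  rcases hT.eq_or_lt with hT0 | hT0
  · rw [← hT0, zero_pow three_ne_zero]
    positivity
  obtain ⟨i, -, hi⟩ := exists_ne_zero_of_sum_ne_zero hT0.ne'
  obtain ⟨j, -, -⟩ := exists_ne_zero_of_sum_ne_zero hi
  have ha : (0 : 𝕜) < Fintype.card α := Nat.cast_pos.2 (Fintype.card_pos_iff.2 ⟨i⟩)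
  have hb : (0 : 𝕜) < Fintype.card β := Nat.cast_pos.2 (Fintype.card_pos_iff.2 ⟨j⟩)
  -- The weights are the reciprocals of the average row sum and the average column sum.
  have h := three_mul_sum_le_mul_mul_sum_add_card_div_add_card_div hf
    (div_pos ha hT0) (div_pos hb hT0)
  rw [div_div_cancel₀ ha.ne', div_div_cancel₀ hb.ne', div_mul_div_comm, div_mul_eq_mul_div,
    ← pow_two] at h
  calc (∑ i, ∑ j, f i j) ^ 3 = (∑ i, ∑ j, f i j) * (∑ i, ∑ j, f i j) ^ 2 := pow_succ' ..
    _ ≤ _ := (le_div_iff₀ (pow_pos hT0 2)).1 (by linarith)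

end NonnegMatrix

section Finset

variable {α : Type*} [DecidableEq α]

lemma card_filter_product_ne_add_card_inter (s t : Finset α) :
    #{p ∈ s ×ˢ t | p.1 ≠ p.2} + #(s ∩ t) = #s * #t := by
  have hdiag : #{p ∈ s ×ˢ t | p.1 = p.2} = #(s ∩ t) :=
    card_bij' (fun p _ ↦ p.1) (fun i _ ↦ (i, i)) (by grind) (by grind) (by grind) (by grind)
  rw [← hdiag, add_comm, card_filter_add_card_filter_not, card_product]

end Finset

section DegreeSums

variable {V : Type*} [Fintype V] (G : SimpleGraph V) [DecidableRel G.Adj]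

lemma four_mul_card_edgeFinset_sq_le_card_mul_sum_degree_sq :
    4 * #G.edgeFinset ^ 2 ≤ Fintype.card V * ∑ v, G.degree v ^ 2 := by
  calc 4 * #G.edgeFinset ^ 2 = (∑ v, G.degree v) ^ 2 := by
        rw [sum_degrees_eq_twice_card_edges]; ring
    _ ≤ Fintype.card V * ∑ v, G.degree v ^ 2 := by
        exact_mod_cast sq_sum_le_card_mul_sum_sq (s := univ) (f := fun v ↦ (G.degree v : ℤ))

lemma eight_mul_card_edgeFinset_pow_three_le_card_sq_mul_sum :
    8 * #G.edgeFinset ^ 3 ≤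
      Fintype.card V ^ 2 * ∑ v, ∑ w ∈ G.neighborFinset v, G.degree v * G.degree w := by
  have hrow v : ∑ w, (if G.Adj v w then 1 else 0 : ℚ) = G.degree v := by
    simp [← neighborFinset_eq_filter]
  have hcol w : ∑ v, (if G.Adj v w then 1 else 0 : ℚ) = G.degree w := by
    simp_rw [G.adj_comm _ w, hrow]
  have h := sum_pow_three_le_card_mul_card_mul_sum (f := fun v w ↦ if G.Adj v w then (1 : ℚ) else 0)
    fun v w ↦ ite_nonneg zero_le_one le_rfl
  simp only [hrow, hcol, ite_mul, one_mul, zero_mul, ← sum_filter, ← neighborFinset_eq_filter] at h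
  norm_cast at h
  calc 8 * #G.edgeFinset ^ 3 = (∑ v, G.degree v) ^ 3 := by
        rw [sum_degrees_eq_twice_card_edges]; ring
    _ ≤ _ := by rwa [sq]

end DegreeSums

section Graph

variable {V : Type*}

/-- The vertices `u, v, w` form an induced path with two edges, centred at `u` and with distinct
nonadjacent ends `v` and `w`. The ends are ordered, so each such path arises twice. -/
def IsInducedCherry (G : SimpleGraph V) (u v w : V) : Prop :=
  G.Adj u v ∧ G.Adj u w ∧ Gᶜ.Adj v w

variable [DecidableEq V] {G : SimpleGraph V}

lemma IsInducedCherry.card_eq_three {u v w : V} (h : IsInducedCherry G u v w) :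
    #{u, v, w} = 3 :=
  card_triple_eq_three_iff.2 ⟨h.1.ne, h.2.1.ne, h.2.2.ne⟩

lemma IsInducedCherry.and_triple_eq_iff {u v w u' v' w' : V} (h : IsInducedCherry G u v w) :
    IsInducedCherry G u' v' w' ∧ ({u', v', w'} : Finset V) = {u, v, w} ↔
      u' = u ∧ (v' = v ∧ w' = w ∨ v' = w ∧ w' = v) := by
  obtain ⟨huv, huw, hvw⟩ := h
  simp only [IsInducedCherry, compl_adj] at *
  have hcomm := G.adj_comm
  constructor
  · rintro ⟨h', hS⟩
    have hu' : u' ∈ ({u, v, w} : Finset V) := by simp [← hS]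
    have hv' : v' ∈ ({u, v, w} : Finset V) := by simp [← hS]
    have hw' : w' ∈ ({u, v, w} : Finset V) := by simp [← hS]
    grind [G.irrefl]
  · grind

variable [Fintype V]

lemma IsInducedCherry.card_filter_triple_eq {u v w : V} (h : IsInducedCherry G u v w) :
    #{p : V × V × V | IsInducedCherry G p.1 p.2.1 p.2.2 ∧
      ({p.1, p.2.1, p.2.2} : Finset V) = {u, v, w}} = 2 := by
  rw [← card_pair (show (u, v, w) ≠ (u, w, v) by simp [h.2.2.ne])]
  congr 1
  ext ⟨u', v', w'⟩
  simp only [mem_filter, mem_univ, true_and, h.and_triple_eq_iff, mem_insert, mem_singleton,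
    Prod.mk.injEq]
  grind

variable (G) [DecidableRel G.Adj]

lemma edgeFinset_filter_mem_triple (x y z : V) :
    {e ∈ G.edgeFinset | ∀ v ∈ e, v ∈ ({x, y, z} : Finset V)} =
      {e ∈ ({s(x, y), s(x, z), s(y, z)} : Finset (Sym2 V)) | e ∈ G.edgeSet} := by
  ext e
  induction e with | _ a b
  have := G.irrefl (v := a)
  have := G.adj_comm
  simp only [mem_filter, mem_edgeFinset, mem_edgeSet, Sym2.mem_iff, mem_insert, mem_singleton,
    Sym2.eq_iff, forall_eq_or_imp, forall_eq]
  grind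

lemma card_edgeFinset_filter_mem_triple {x y z : V} (hxy : x ≠ y) (hxz : x ≠ z) (hyz : y ≠ z) :
    #{e ∈ G.edgeFinset | ∀ v ∈ e, v ∈ ({x, y, z} : Finset V)} =
      (if G.Adj x y then 1 else 0) + (if G.Adj x z then 1 else 0) +
        if G.Adj y z then 1 else 0 := by
  rw [edgeFinset_filter_mem_triple, card_filter, sum_insert, sum_insert, sum_singleton]
  all_goals simp [hxy, hxz, hyz, add_assoc, hxy.symm, hyz.symm]

lemma card_edgeFinset_filter_mem_eq_two_iff {S : Finset V} (hS : #S = 3) :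
    #{e ∈ G.edgeFinset | ∀ v ∈ e, v ∈ S} = 2 ↔
      ∃ u v w, IsInducedCherry G u v w ∧ {u, v, w} = S := by
  constructor
  · obtain ⟨x, y, z, hxy, hxz, hyz, rfl⟩ := card_eq_three.1 hS
    rw [card_edgeFinset_filter_mem_triple G hxy hxz hyz]
    intro h
    obtain ⟨hx, hx', h₀⟩ | ⟨hy, hy', h₀⟩ | ⟨hz, hz', h₀⟩ :
        (G.Adj x y ∧ G.Adj x z ∧ ¬G.Adj y z) ∨ (G.Adj x y ∧ G.Adj y z ∧ ¬G.Adj x z) ∨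
          (G.Adj x z ∧ G.Adj y z ∧ ¬G.Adj x y) := by grind
    · exact ⟨x, y, z, ⟨hx, hx', hyz, h₀⟩, rfl⟩
    · exact ⟨y, x, z, ⟨hy.symm, hy', hxz, h₀⟩, insert_comm ..⟩
    · exact ⟨z, x, y, ⟨hz.symm, hz'.symm, hxy, h₀⟩, by grind⟩
  · rintro ⟨u, v, w, ⟨huv, huw, hvw⟩, rfl⟩
    rw [card_edgeFinset_filter_mem_triple G huv.ne huw.ne hvw.ne]
    simp [huv, huw, (compl_adj ..).1 hvw]

lemma card_filter_isInducedCherry :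
    #{p : V × V × V | IsInducedCherry G p.1 p.2.1 p.2.2} =
      ∑ v, ∑ w ∈ Gᶜ.neighborFinset v, #(G.neighborFinset v ∩ G.neighborFinset w) := by
  simp_rw [← card_sigma]
  refine card_bij' (fun p _ ↦ ⟨p.2.1, p.2.2, p.1⟩) (fun q _ ↦ (q.2.2, q.1, q.2.1)) ?_ ?_
    (fun _ _ ↦ rfl) (fun _ _ ↦ rfl)
  all_goals simp only [mem_sigma, mem_univ, true_and, mem_inter, mem_neighborFinset,
    IsInducedCherry]
  all_goals grind [G.adj_comm]

lemma sum_eq_add_sum_neighborFinset_add_sum_neighborFinset_compl {M : Type*} [AddCommMonoid M]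
    (v : V) (f : V → M) :
    ∑ w, f w = f v + ∑ w ∈ G.neighborFinset v, f w + ∑ w ∈ Gᶜ.neighborFinset v, f w := by
  have hv : v ∈ (G.neighborFinset v)ᶜ := by simp
  rw [neighborFinset_compl, ← sum_add_sum_compl (G.neighborFinset v),
    sdiff_singleton_eq_erase, ← add_sum_erase _ _ hv]
  ac_rfl

end Graph

section Counting

variable {n : ℕ} (G : SimpleGraph (Fin n))

lemma A_eq_sum_card_filter_product_ne :
    A G = ∑ v, ∑ w ∈ Gᶜ.neighborFinset v,
      #{p ∈ G.neighborFinset v ×ˢ G.neighborFinset w | p.1 ≠ p.2} := by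
  simp_rw [← card_sigma]
  refine card_bij' (fun p _ ↦ ⟨p.2.1, p.2.2.1, p.1, p.2.2.2⟩)
    (fun q _ ↦ (q.2.2.1, q.1, q.2.1, q.2.2.2)) ?_ ?_ (fun _ _ ↦ rfl) (fun _ _ ↦ rfl)
  all_goals simp only [mem_filter, mem_univ, true_and, mem_sigma, mem_product, mem_neighborFinset,
    compl_adj]
  all_goals grind [G.adj_comm, G.ne_of_adj]

lemma two_mul_t_eq_card_filter_isInducedCherry :
    2 * t G = #{p : Fin n × Fin n × Fin n | IsInducedCherry G p.1 p.2.1 p.2.2} := by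
  rw [t, mul_comm, ← smul_eq_mul, ← sum_const, eq_comm]
  refine (card_eq_sum_card_fiberwise (f := fun p ↦ {p.1, p.2.1, p.2.2}) ?_).trans
    (sum_congr rfl fun S hS ↦ ?_)
  · intro p hp
    have hp : IsInducedCherry G p.1 p.2.1 p.2.2 := by simpa using hp
    simpa [hp.card_eq_three] using
      (card_edgeFinset_filter_mem_eq_two_iff G hp.card_eq_three).2 ⟨_, _, _, hp, rfl⟩
  · obtain ⟨hcard, hedges⟩ := mem_filter.1 hS
    obtain ⟨u, v, w, h, rfl⟩ :=
      (card_edgeFinset_filter_mem_eq_two_iff G (mem_powersetCard.1 hcard).2).1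
        (by convert hedges)
    rw [filter_filter]
    convert h.card_filter_triple_eq

lemma A_add_two_mul_t_add_sum_degree_sq_add_sum_degree_mul_degree :
    A G + 2 * t G + ∑ v, G.degree v ^ 2 +
      ∑ v, ∑ w ∈ G.neighborFinset v, G.degree v * G.degree w = 4 * #G.edgeFinset ^ 2 := by
  have hcompl : A G + 2 * t G = ∑ v, ∑ w ∈ Gᶜ.neighborFinset v, G.degree v * G.degree w := by
    rw [A_eq_sum_card_filter_product_ne, two_mul_t_eq_card_filter_isInducedCherry,
      card_filter_isInducedCherry]
    simp_rw [← sum_add_distrib, card_filter_product_ne_add_card_inter,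
      card_neighborFinset_eq_degree]
  calc _ = ∑ v, (G.degree v * G.degree v + ∑ w ∈ G.neighborFinset v, G.degree v * G.degree w +
        ∑ w ∈ Gᶜ.neighborFinset v, G.degree v * G.degree w) := by
        simp only [hcompl, sum_add_distrib, sq]; ring
    _ = (∑ v, G.degree v) * ∑ w, G.degree w := by
        rw [sum_mul_sum]
        exact sum_congr rfl fun v _ ↦
          (sum_eq_add_sum_neighborFinset_add_sum_neighborFinset_compl G v
            (G.degree v * G.degree ·)).symm
    _ = 4 * #G.edgeFinset ^ 2 := by rw [sum_degrees_eq_twice_card_edges]; ring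

end Counting

/-- For a graph on `n ≥ 1` vertices with `m` edges,
`A(G) ≤ 4m² − 4m²/n − 8m³/n² − 2 t(G)`. -/
theorem stmt_3 (n : ℕ) (hn : 1 ≤ n) (G : SimpleGraph (Fin n))
    (m : ℕ) (hm : G.edgeFinset.card = m) :
    (A G : ℝ) ≤ 4 * (m : ℝ) ^ 2 - 4 * (m : ℝ) ^ 2 / (n : ℝ)
      - 8 * (m : ℝ) ^ 3 / (n : ℝ) ^ 2 - 2 * (t G : ℝ) := by
  subst hm
  have : 0 < n := hn
  have hcount := A_add_two_mul_t_add_sum_degree_sq_add_sum_degree_mul_degree G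
  have hsq := four_mul_card_edgeFinset_sq_le_card_mul_sum_degree_sq G
  have hwalk := eight_mul_card_edgeFinset_pow_three_le_card_sq_mul_sum G
  rw [Fintype.card_fin] at hsq hwalk
  rify at hcount hsq hwalk
  rw [← div_le_iff₀' (by positivity)] at hsq hwalk
  linarith
end

section
/- Let β ∈ [0,1]. For every sequence (G_n)_{n≥2} of finite simple graphs, where G_n has exactly n vertices and the edge density of G_n tends to β as n → ∞, one has limsup_{n→∞} A(G_n)/n⁴ ≤ β²(1−β). Moreover, there exists such a sequence (G_n) with edge density tending to β for which A(G_n)/n⁴ converges to β²(1−β). -/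
open Finset SimpleGraph Filter
open scoped Classical

/-- The edge density of an `n`-vertex graph: `m / (n choose 2)`. -/
noncomputable def density {n : ℕ} (G : SimpleGraph (Fin n)) : ℝ :=
  (G.edgeFinset.card : ℝ) / (n.choose 2 : ℝ)

/-!
Splitting pairs of directed edges `(u, v)`, `(w, x)` according to whether `vw` is an edge shows that
alternating walks and walks of length three together number `(2m)²`. Walks of length three number
at least `(2m)³ / n²`: weigh the summands `d(v) d(w)` over directed edges `(v, w)` against the
average degree `q` by AM-GM, `3 ≤ d(v) d(w) / q² + q / d(v) + q / d(w)`, where the last two terms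
contribute at most `n q = 2m` each. So `A(G) / n⁴ ≤ t² - t³` with `t = 2m / n² → β`.
Equality needs all degrees to be almost equal, which Cayley sum graphs achieve for every
prescribed degree; passing from walks to paths costs only `O(n³)`.
-/

section WeightedSums

lemma three_le_add_add_of_mul_eq_one {a b c : ℝ} (ha : 0 ≤ a) (hb : 0 ≤ b) (hc : 0 ≤ c)
    (h : a * b * c = 1) : 3 ≤ a + b + c := by
  have amgm := Real.geom_mean_le_arith_mean3_weighted (w₁ := 1 / 3) (w₂ := 1 / 3) (w₃ := 1 / 3)
    (by norm_num) (by norm_num) (by norm_num) ha hb hc (by norm_num)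
  rw [← Real.mul_rpow ha hb, ← Real.mul_rpow (mul_nonneg ha hb) hc, h, Real.one_rpow] at amgm
  linarith

variable {ι κ : Type*} [Fintype ι] [Fintype κ] {W : ι → κ → ℝ}

lemma sum_sum_mul_div_sum_le {q : ℝ} (hq : 0 ≤ q) :
    ∑ i, ∑ j, W i j * (q / ∑ j', W i j') ≤ Fintype.card ι * q := by
  calc ∑ i, ∑ j, W i j * (q / ∑ j', W i j')
      = ∑ i, (∑ j, W i j) * (q / ∑ j', W i j') := by simp only [Finset.sum_mul]
    _ ≤ ∑ _i : ι, q := by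
        refine Finset.sum_le_sum fun i _ => ?_
        rcases eq_or_ne (∑ j, W i j) 0 with h | h
        · simpa [h] using hq
        · rw [mul_div_cancel₀ _ h]
    _ = Fintype.card ι * q := by simp

lemma three_mul_apply_le (hW : ∀ i j, 0 ≤ W i j) {p q : ℝ} (hp : 0 < p) (hq : 0 < q)
    (i : ι) (j : κ) :
    3 * W i j ≤ W i j * ((∑ j', W i j') * ∑ i', W i' j) / (p * q)
      + W i j * (p / ∑ j', W i j') + W i j * (q / ∑ i', W i' j) := by
  rcases (hW i j).eq_or_lt with h | h
  · simp [← h]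
  have row_pos : 0 < ∑ j', W i j' :=
    h.trans_le (Finset.single_le_sum (fun j' _ => hW i j') (mem_univ j))
  have col_pos : 0 < ∑ i', W i' j :=
    h.trans_le (Finset.single_le_sum (fun i' _ => hW i' j) (mem_univ i))
  generalize (∑ j', W i j') = r at row_pos ⊢
  generalize (∑ i', W i' j) = c at col_pos ⊢
  -- The three ratios multiply to `1`.
  have amgm : 3 ≤ r * c / (p * q) + p / r + q / c :=
    three_le_add_add_of_mul_eq_one (by positivity) (by positivity) (by positivity) (by field_simp)
  calc 3 * W i j = W i j * 3 := mul_comm _ _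
    _ ≤ W i j * (r * c / (p * q) + p / r + q / c) := by gcongr
    _ = _ := by ring

lemma three_mul_sum_sum_le (hW : ∀ i j, 0 ≤ W i j) {p q : ℝ} (hp : 0 < p) (hq : 0 < q) :
    3 * ∑ i, ∑ j, W i j ≤
      (∑ i, ∑ j, W i j * ((∑ j', W i j') * ∑ i', W i' j)) / (p * q)
        + Fintype.card ι * p + Fintype.card κ * q := by
  have sum_row : ∑ i, ∑ j, W i j * (p / ∑ j', W i j') ≤ Fintype.card ι * p :=
    sum_sum_mul_div_sum_le hp.le
  have sum_col : ∑ i, ∑ j, W i j * (q / ∑ i', W i' j) ≤ Fintype.card κ * q := by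
    rw [Finset.sum_comm]
    exact sum_sum_mul_div_sum_le (W := fun j i => W i j) hq.le
  have sum_amgm : 3 * ∑ i, ∑ j, W i j ≤
      (∑ i, ∑ j, W i j * ((∑ j', W i j') * ∑ i', W i' j)) / (p * q)
        + ∑ i, ∑ j, W i j * (p / ∑ j', W i j') + ∑ i, ∑ j, W i j * (q / ∑ i', W i' j) := by
    rw [Finset.sum_div, Finset.mul_sum, ← Finset.sum_add_distrib, ← Finset.sum_add_distrib]
    refine Finset.sum_le_sum fun i _ => ?_
    rw [Finset.sum_div, Finset.mul_sum, ← Finset.sum_add_distrib, ← Finset.sum_add_distrib]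
    exact Finset.sum_le_sum fun j _ => three_mul_apply_le hW hp hq i j
  linarith

theorem sum_sum_pow_three_le (hW : ∀ i j, 0 ≤ W i j) :
    (∑ i, ∑ j, W i j) ^ 3 ≤ Fintype.card ι * Fintype.card κ *
      ∑ i, ∑ j, W i j * ((∑ j', W i j') * ∑ i', W i' j) := by
  have row_nonneg (i : ι) : 0 ≤ ∑ j, W i j := Finset.sum_nonneg fun j _ => hW i j
  have col_nonneg (j : κ) : 0 ≤ ∑ i, W i j := Finset.sum_nonneg fun i _ => hW i j
  have hP : 0 ≤ ∑ i, ∑ j, W i j * ((∑ j', W i j') * ∑ i', W i' j) :=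
    Finset.sum_nonneg fun i _ => Finset.sum_nonneg fun j _ =>
      mul_nonneg (hW i j) (mul_nonneg (row_nonneg i) (col_nonneg j))
  have hS : 0 ≤ ∑ i, ∑ j, W i j := Finset.sum_nonneg fun i _ => row_nonneg i
  rcases hS.eq_or_lt with hS | hS
  · rw [← hS, zero_pow three_ne_zero]
    positivity
  have : Nonempty ι := by
    by_contra h
    simp_all
  have : Nonempty κ := by
    by_contra h
    simp_all
  have hm : (0 : ℝ) < Fintype.card ι := by exact_mod_cast Fintype.card_pos
  have hn : (0 : ℝ) < Fintype.card κ := by exact_mod_cast Fintype.card_pos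
  have tangent := three_mul_sum_sum_le hW (div_pos hS hm) (div_pos hS hn)
  rw [mul_div_cancel₀ _ hm.ne', mul_div_cancel₀ _ hn.ne'] at tangent
  generalize (∑ i, ∑ j, W i j) = S at hS tangent ⊢
  generalize (∑ i, ∑ j, W i j * ((∑ j', W i j') * ∑ i', W i' j)) = P at tangent ⊢
  generalize (Fintype.card ι : ℝ) = m at hm tangent ⊢
  generalize (Fintype.card κ : ℝ) = n at hn tangent ⊢
  have key : S * (S / m * (S / n)) ≤ P := (le_div_iff₀ (by positivity)).1 (by linarith)
  calc S ^ 3 = m * n * (S * (S / m * (S / n))) := by field_simp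
    _ ≤ m * n * P := by gcongr

end WeightedSums

section Walks

variable {V : Type*} [Fintype V] (G : SimpleGraph V) [DecidableRel G.Adj]

/-- The quadruples `(u, v, w, x)` with `uv`, `wx` edges and `vw` not an edge. Unlike those counted
by `A`, the vertices may coincide, so that their number is a sum over `(v, w)`. -/
def alternatingWalks : Finset (V × V × V × V) :=
  {p | G.Adj p.1 p.2.1 ∧ G.Adj p.2.2.1 p.2.2.2 ∧ ¬ G.Adj p.2.1 p.2.2.1}

/-- The walks `(u, v, w, x)` of length three, as quadruples of vertices: the
complement of `alternatingWalks` among pairs of directed edges. -/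
def threeWalks : Finset (V × V × V × V) :=
  {p | G.Adj p.1 p.2.1 ∧ G.Adj p.2.2.1 p.2.2.2 ∧ G.Adj p.2.1 p.2.2.1}

lemma natCast_degree_eq_sum_ite (R : Type*) [NonAssocSemiring R] (v : V) :
    (G.degree v : R) = ∑ w, if G.Adj v w then 1 else 0 := by
  rw [← card_neighborFinset_eq_degree, neighborFinset_eq_filter, Finset.sum_boole]

lemma card_filter_adj_adj (R : V → V → Prop) [DecidableRel R] :
    #{p : V × V × V × V | G.Adj p.1 p.2.1 ∧ G.Adj p.2.2.1 p.2.2.2 ∧ R p.2.1 p.2.2.1} =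
      ∑ v, ∑ w with R v w, G.degree v * G.degree w := by
  have degree_eq (v : V) : G.degree v = ∑ w, if G.Adj v w then 1 else 0 := by
    exact_mod_cast natCast_degree_eq_sum_ite G ℕ v
  simp only [Finset.card_filter, Fintype.sum_prod_type, Finset.sum_filter]
  rw [Finset.sum_comm]
  refine Finset.sum_congr rfl fun v _ => ?_
  rw [Finset.sum_comm]
  refine Finset.sum_congr rfl fun w _ => ?_
  by_cases hR : R v w
  · simp only [hR, and_true, if_true, degree_eq, Finset.sum_mul_sum, ite_zero_mul_ite_zero,
      mul_one, G.adj_comm v]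
  · simp only [hR, and_false, if_false, Finset.sum_const_zero]

lemma card_threeWalks :
    #(threeWalks G) = ∑ v, ∑ w ∈ G.neighborFinset v, G.degree v * G.degree w := by
  simp only [threeWalks, card_filter_adj_adj, neighborFinset_eq_filter]

lemma card_alternatingWalks_add_card_threeWalks :
    #(alternatingWalks G) + #(threeWalks G) = (∑ v, G.degree v) ^ 2 := by
  simp only [alternatingWalks, threeWalks, card_filter_adj_adj G fun v w => ¬ G.Adj v w,
    card_filter_adj_adj G G.Adj, ← Finset.sum_add_distrib, sq, Finset.sum_mul_sum]
  refine Finset.sum_congr rfl fun v _ => ?_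
  rw [add_comm, Finset.sum_filter_add_sum_filter_not]

theorem sum_degree_pow_three_le :
    (∑ v, G.degree v) ^ 3 ≤ Fintype.card V ^ 2 * #(threeWalks G) := by
  have row (v : V) : ∑ w, (if G.Adj v w then (1 : ℝ) else 0) = G.degree v :=
    (natCast_degree_eq_sum_ite G ℝ v).symm
  have col (w : V) : ∑ v, (if G.Adj v w then (1 : ℝ) else 0) = G.degree w := by
    simpa only [G.adj_comm] using row w
  have h := sum_sum_pow_three_le
    (W := fun v w => if G.Adj v w then (1 : ℝ) else 0) fun v w => by positivity
  simp only [row, col, ite_mul, one_mul, zero_mul, ← Finset.sum_filter] at h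
  rw [card_threeWalks, sq]
  simp only [neighborFinset_eq_filter]
  exact_mod_cast h

variable {G}

lemma card_threeWalks_le {k : ℕ} (hk : ∀ v, G.degree v ≤ k) :
    #(threeWalks G) ≤ k ^ 2 * ∑ v, G.degree v := by
  rw [card_threeWalks, Finset.mul_sum]
  refine Finset.sum_le_sum fun v _ => ?_
  calc ∑ w ∈ G.neighborFinset v, G.degree v * G.degree w
      ≤ ∑ _w ∈ G.neighborFinset v, k * k := by gcongr <;> exact hk _
    _ = k ^ 2 * G.degree v := by
        rw [Finset.sum_const, card_neighborFinset_eq_degree, smul_eq_mul, mul_comm, sq]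

end Walks

section AlternatingPaths

variable {n : ℕ} (G : SimpleGraph (Fin n))

lemma A_le_card_alternatingWalks : A G ≤ #(alternatingWalks G) := by
  refine Finset.card_le_card fun p hp => ?_
  simp only [alternatingWalks, Finset.mem_filter] at hp ⊢
  tauto

/-- An alternating walk can only revisit a vertex by `v = w` or `u = x`: each of the other
coincidences would turn one of the two edges into the non-edge `vw`, or into a loop. -/
lemma card_alternatingWalks_le : #(alternatingWalks G) ≤ A G + 2 * n ^ 3 := by
  let repeatMiddle (q : Fin n × Fin n × Fin n) := (q.1, q.2.1, q.2.1, q.2.2)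
  let repeatEnds (q : Fin n × Fin n × Fin n) := (q.1, q.2.1, q.2.2, q.1)
  have card_image_triples (f : Fin n × Fin n × Fin n → Fin n × Fin n × Fin n × Fin n) :
      #(univ.image f) ≤ n ^ 3 :=
    card_image_le.trans_eq <| by simp [pow_succ', pow_zero]
  have cover : #(alternatingWalks G \ (univ.image repeatMiddle ∪ univ.image repeatEnds)) ≤ A G := by
    refine Finset.card_le_card ?_
    rintro ⟨u, v, w, x⟩ h
    obtain ⟨⟨huv, hwx, hvw⟩, hne_middle, hne_ends⟩ :
        (G.Adj u v ∧ G.Adj w x ∧ ¬ G.Adj v w) ∧ v ≠ w ∧ u ≠ x := by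
      simpa [alternatingWalks, repeatMiddle, repeatEnds, not_or, eq_comm] using h
    have huw : u ≠ w := by
      rintro rfl
      exact hvw huv.symm
    have hvx : v ≠ x := by
      rintro rfl
      exact hvw hwx.symm
    simpa using ⟨huv.ne, huw, hne_ends, hne_middle, hvx, hwx.ne, huv, hwx, hvw⟩
  linarith [card_le_card_sdiff_add_card (s := alternatingWalks G)
      (t := univ.image repeatMiddle ∪ univ.image repeatEnds),
    card_union_le (univ.image repeatMiddle) (univ.image repeatEnds),
    card_image_triples repeatMiddle, card_image_triples repeatEnds]

end AlternatingPaths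

section Densities

/-- The homomorphism density `t(K₂, G) = 2|E| / |V|²` of an edge, written as a degree sum. It
is `density` normalized by `n²` in place of `n (n - 1)`. -/
noncomputable def edgeHomDensity {V : Type*} [Fintype V] (G : SimpleGraph V)
    [DecidableRel G.Adj] : ℝ :=
  (∑ v, G.degree v : ℕ) / (Fintype.card V : ℝ) ^ 2

variable {n : ℕ} (G : SimpleGraph (Fin n))

lemma edgeHomDensity_eq_density_mul (hn : 2 ≤ n) :
    edgeHomDensity G = density G * (1 - 1 / n) := by
  have h : (2 : ℝ) ≤ n := by exact_mod_cast hn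
  have hn1 : (n : ℝ) - 1 ≠ 0 := by linarith
  rw [edgeHomDensity, density, sum_degrees_eq_twice_card_edges, Nat.cast_choose_two,
    Fintype.card_fin]
  push_cast
  field_simp

theorem A_div_pow_four_le :
    (A G : ℝ) / n ^ 4 ≤ edgeHomDensity G ^ 2 - edgeHomDensity G ^ 3 := by
  rcases n.eq_zero_or_pos with rfl | hn
  · simp [edgeHomDensity]
  have hA : (A G : ℝ) ≤ #(alternatingWalks G) := by exact_mod_cast A_le_card_alternatingWalks G
  have hsplit : (#(alternatingWalks G) + #(threeWalks G) : ℝ) = (∑ v, G.degree v : ℕ) ^ 2 := by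
    exact_mod_cast card_alternatingWalks_add_card_threeWalks G
  have hwalks : ((∑ v, G.degree v : ℕ) : ℝ) ^ 3 ≤ n ^ 2 * #(threeWalks G) := by
    exact_mod_cast Fintype.card_fin n ▸ sum_degree_pow_three_le G
  rw [edgeHomDensity, Fintype.card_fin]
  generalize ((∑ v, G.degree v : ℕ) : ℝ) = S at *
  have : (0 : ℝ) < n := by exact_mod_cast hn
  calc (A G : ℝ) / n ^ 4 ≤ (S ^ 2 - S ^ 3 / n ^ 2) / (n : ℝ) ^ 4 := by
        have : S ^ 3 / n ^ 2 ≤ #(threeWalks G) := (div_le_iff₀' (by positivity)).2 hwalks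
        gcongr
        linarith
    _ = (S / n ^ 2) ^ 2 - (S / n ^ 2) ^ 3 := by field_simp

theorem le_A_div_pow_four {k : ℕ} (hk : ∀ v, G.degree v ≤ k) :
    edgeHomDensity G ^ 2 - (k / n) ^ 2 * edgeHomDensity G - 2 / n ≤ (A G : ℝ) / n ^ 4 := by
  rcases n.eq_zero_or_pos with rfl | hn
  · simp [edgeHomDensity]
  have hA : (#(alternatingWalks G) : ℝ) ≤ A G + 2 * n ^ 3 := by
    exact_mod_cast card_alternatingWalks_le G
  have hsplit : (#(alternatingWalks G) + #(threeWalks G) : ℝ) = (∑ v, G.degree v : ℕ) ^ 2 := by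
    exact_mod_cast card_alternatingWalks_add_card_threeWalks G
  have hwalks : (#(threeWalks G) : ℝ) ≤ k ^ 2 * (∑ v, G.degree v : ℕ) := by
    exact_mod_cast card_threeWalks_le hk
  rw [edgeHomDensity, Fintype.card_fin]
  generalize ((∑ v, G.degree v : ℕ) : ℝ) = S at *
  have : (0 : ℝ) < n := by exact_mod_cast hn
  calc (S / n ^ 2) ^ 2 - (k / n) ^ 2 * (S / n ^ 2) - 2 / n
      = (S ^ 2 - k ^ 2 * S - 2 * n ^ 3) / (n : ℝ) ^ 4 := by field_simp
    _ ≤ (A G : ℝ) / n ^ 4 := by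
        gcongr
        linarith

lemma tendsto_density_iff_tendsto_edgeHomDensity {G : (n : ℕ) → SimpleGraph (Fin n)} {β : ℝ} :
    Tendsto (fun n => density (G n)) atTop (nhds β) ↔
      Tendsto (fun n => edgeHomDensity (G n)) atTop (nhds β) := by
  have hone : Tendsto (fun n : ℕ => 1 - 1 / (n : ℝ)) atTop (nhds 1) := by
    simpa using tendsto_const_nhds.sub (tendsto_one_div_atTop_nhds_zero_nat (𝕜 := ℝ))
  constructor <;> intro h
  · refine (mul_one β ▸ h.mul hone).congr' ?_
    filter_upwards [eventually_ge_atTop 2] with n hn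
    exact (edgeHomDensity_eq_density_mul (G n) hn).symm
  · refine (div_one β ▸ h.div hone one_ne_zero).congr' ?_
    filter_upwards [eventually_ge_atTop 2, hone.eventually_ne one_ne_zero] with n hn hne
    simp only [Pi.div_apply, edgeHomDensity_eq_density_mul (G n) hn, mul_div_cancel_right₀ _ hne]

theorem limsup_A_div_pow_four_le {G : (n : ℕ) → SimpleGraph (Fin n)} {β : ℝ}
    (hG : Tendsto (fun n => density (G n)) atTop (nhds β)) :
    limsup (fun n => (A (G n) : ℝ) / (n : ℝ) ^ 4) atTop ≤ β ^ 2 * (1 - β) := by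
  have ht := tendsto_density_iff_tendsto_edgeHomDensity.1 hG
  have hbound := (ht.pow 2).sub (ht.pow 3)
  calc limsup (fun n => (A (G n) : ℝ) / (n : ℝ) ^ 4) atTop
      ≤ limsup (fun n => edgeHomDensity (G n) ^ 2 - edgeHomDensity (G n) ^ 3) atTop :=
        limsup_le_limsup (.of_forall fun n => A_div_pow_four_le (G n))
          (IsCoboundedUnder.of_frequently_ge (a := 0) (.of_forall fun n => by positivity))
          hbound.isBoundedUnder_le
    _ = β ^ 2 - β ^ 3 := hbound.limsup_eq
    _ = β ^ 2 * (1 - β) := by ring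

end Densities

section NearlyRegular

/-- The Cayley sum graph on `Γ`: distinct `u` and `v` are joined when `u + v ∈ s`. Its
degrees are within one of `|s|`, with no symmetry required of `s`. -/
def cayleySumGraph {Γ : Type*} [AddCommMagma Γ] (s : Set Γ) : SimpleGraph Γ where
  Adj u v := u ≠ v ∧ u + v ∈ s
  symm := ⟨fun u v h => ⟨h.1.symm, add_comm u v ▸ h.2⟩⟩
  loopless := ⟨fun _ h => h.1 rfl⟩

/-- Every degree is `k` or `k - 1`: the regularity, up to one, of a sum graph, where `v` loses a
neighbor if `v + v` lies in the connection set. -/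
def IsNearlyRegular {V : Type*} [Fintype V] (G : SimpleGraph V) [DecidableRel G.Adj]
    (k : ℕ) : Prop :=
  ∀ v, G.degree v ≤ k ∧ k ≤ G.degree v + 1

lemma isNearlyRegular_cayleySumGraph {Γ : Type*} [AddCommGroup Γ] [Fintype Γ] (s : Finset Γ) :
    IsNearlyRegular (cayleySumGraph (s : Set Γ)) #s := by
  intro v
  have hN : (cayleySumGraph (s : Set Γ)).neighborFinset v =
      (s.map (Equiv.subRight v).toEmbedding).erase v := by
    ext w
    rw [mem_neighborFinset]
    simp [cayleySumGraph, ne_comm, add_comm v w]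
  rw [← card_neighborFinset_eq_degree, hN]
  have hcard : #(s.map (Equiv.subRight v).toEmbedding) = #s := card_map _
  constructor
  · exact card_erase_le.trans_eq hcard
  · rw [← hcard]
    exact tsub_le_iff_right.1 pred_card_le_card_erase

lemma exists_isNearlyRegular {V : Type*} [Fintype V] {k : ℕ} (hk : k ≤ Fintype.card V) :
    ∃ G : SimpleGraph V, IsNearlyRegular G k := by
  rcases isEmpty_or_nonempty V with hV | hV
  · exact ⟨⊥, isEmptyElim⟩
  have : NeZero (Fintype.card V) := ⟨Fintype.card_ne_zero⟩
  let _ : AddCommGroup V := (Fintype.equivFin V).addCommGroup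
  obtain ⟨s, -, rfl⟩ := exists_subset_card_eq (s := (univ : Finset V)) hk
  exact ⟨cayleySumGraph s, isNearlyRegular_cayleySumGraph s⟩

lemma IsNearlyRegular.edgeHomDensity_mem_Icc {V : Type*} [Fintype V] {G : SimpleGraph V}
    [DecidableRel G.Adj] {k : ℕ} (hG : IsNearlyRegular G k) :
    edgeHomDensity G ∈ Set.Icc ((k : ℝ) / Fintype.card V - 1 / Fintype.card V)
      (k / Fintype.card V) := by
  have hlower : Fintype.card V * k ≤ ∑ v, G.degree v + Fintype.card V := by
    simpa [Finset.sum_add_distrib] using Finset.sum_le_sum fun v (_ : v ∈ univ) => (hG v).2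
  have hupper : ∑ v, G.degree v ≤ Fintype.card V * k := by
    simpa using Finset.sum_le_sum fun v (_ : v ∈ univ) => (hG v).1
  rw [edgeHomDensity]
  generalize ∑ v, G.degree v = S at *
  generalize Fintype.card V = n at *
  rcases n.eq_zero_or_pos with rfl | hn
  · simp
  have : (0 : ℝ) < n := by exact_mod_cast hn
  have hlower' : (n * k : ℝ) ≤ S + n := by exact_mod_cast hlower
  have hupper' : (S : ℝ) ≤ n * k := by exact_mod_cast hupper
  constructor
  · rw [le_div_iff₀ (by positivity)]
    calc (k / n - 1 / n : ℝ) * n ^ 2 = n * k - n := by field_simp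
      _ ≤ S := by linarith
  · rw [div_le_iff₀ (by positivity)]
    calc (S : ℝ) ≤ n * k := hupper'
      _ = k / n * n ^ 2 := by field_simp

variable {G : (n : ℕ) → SimpleGraph (Fin n)} {k : ℕ → ℕ} {β : ℝ}

lemma tendsto_edgeHomDensity_of_isNearlyRegular (hG : ∀ n, IsNearlyRegular (G n) (k n))
    (hk : Tendsto (fun n => (k n : ℝ) / n) atTop (nhds β)) :
    Tendsto (fun n => edgeHomDensity (G n)) atTop (nhds β) :=
  tendsto_of_tendsto_of_tendsto_of_le_of_le
    (by simpa using hk.sub tendsto_one_div_atTop_nhds_zero_nat) hk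
    (fun n => by simpa using (hG n).edgeHomDensity_mem_Icc.1)
    fun n => by simpa using (hG n).edgeHomDensity_mem_Icc.2

theorem tendsto_A_div_pow_four_of_isNearlyRegular (hG : ∀ n, IsNearlyRegular (G n) (k n))
    (hk : Tendsto (fun n => (k n : ℝ) / n) atTop (nhds β)) :
    Tendsto (fun n => (A (G n) : ℝ) / (n : ℝ) ^ 4) atTop (nhds (β ^ 2 * (1 - β))) := by
  have ht := tendsto_edgeHomDensity_of_isNearlyRegular hG hk
  have hlower := ((ht.pow 2).sub ((hk.pow 2).mul ht)).sub (tendsto_const_div_atTop_nhds_zero_nat 2)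
  have hupper := (ht.pow 2).sub (ht.pow 3)
  rw [show β ^ 2 - β ^ 2 * β - 0 = β ^ 2 * (1 - β) by ring] at hlower
  rw [show β ^ 2 - β ^ 3 = β ^ 2 * (1 - β) by ring] at hupper
  exact tendsto_of_tendsto_of_tendsto_of_le_of_le hlower hupper
    (fun n => le_A_div_pow_four (G n) fun v => (hG n v).1) fun n => A_div_pow_four_le (G n)

end NearlyRegular

/-- `I(AP₄, β) = β²(1−β)`: every sequence of graphs with edge density tending to `β`
has `limsup A(G_n)/n⁴ ≤ β²(1−β)`, and this bound is attained by some sequence. -/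
theorem stmt_4 (β : ℝ) (hβ0 : 0 ≤ β) (hβ1 : β ≤ 1) :
    (∀ G : (n : ℕ) → SimpleGraph (Fin n),
      Tendsto (fun n => density (G n)) atTop (nhds β) →
      limsup (fun n => (A (G n) : ℝ) / (n : ℝ) ^ 4) atTop ≤ β ^ 2 * (1 - β)) ∧
    (∃ G : (n : ℕ) → SimpleGraph (Fin n),
      Tendsto (fun n => density (G n)) atTop (nhds β) ∧
      Tendsto (fun n => (A (G n) : ℝ) / (n : ℝ) ^ 4) atTop (nhds (β ^ 2 * (1 - β)))) := by
  refine ⟨fun G hG => limsup_A_div_pow_four_le hG, ?_⟩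
  have hfloor (n : ℕ) : ⌊β * n⌋₊ ≤ Fintype.card (Fin n) := by
    rw [Fintype.card_fin]
    exact Nat.floor_le_of_le (mul_le_of_le_one_left n.cast_nonneg hβ1)
  choose G hG using fun n => exists_isNearlyRegular (hfloor n)
  have hk : Tendsto (fun n : ℕ => (⌊β * n⌋₊ : ℝ) / n) atTop (nhds β) :=
    (tendsto_nat_floor_mul_div_atTop hβ0).comp tendsto_natCast_atTop_atTop
  have ht := tendsto_edgeHomDensity_of_isNearlyRegular hG hk
  exact ⟨G, tendsto_density_iff_tendsto_edgeHomDensity.2 ht,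
    tendsto_A_div_pow_four_of_isNearlyRegular hG hk⟩
end

section
/- Let G be a finite simple graph on n vertices with degree sequence d_1, …, d_n, and suppose its average degree d = (d_1 + ⋯ + d_n)/n satisfies d ≥ n/2. Then ∑_{i=1}^{n} d_i²(n − d_i) ≤ n·d²·(n−d). -/
open Finset SimpleGraph
open scoped Classical

/-! The graph enters only through its degrees being nonnegative reals with mean `d`. The cubic
`t ↦ t² (n - t)` is not concave on `[0, n]`, but its difference from its tangent line at `d` is
`(t - d)² (n - 2d - t)`, which is nonpositive for all `t ≥ 0` because `d ≥ n/2`. Summing the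
tangent line bound over the degrees cancels the linear term. -/

section SupportingLine

variable {ι R : Type*}

lemma sum_le_card_mul_of_le_add_mul_sub [Ring R] [PartialOrder R] [IsOrderedAddMonoid R]
    {s : Finset ι} {f x : ι → R} {a c m : R} (hx : ∑ i ∈ s, x i = #s * c)
    (hf : ∀ i ∈ s, f i ≤ a + m * (x i - c)) :
    ∑ i ∈ s, f i ≤ #s * a := by
  have sum_deviation : ∑ i ∈ s, (x i - c) = 0 := by
    rw [sum_sub_distrib, hx, sum_const, nsmul_eq_mul, sub_self]
  calc ∑ i ∈ s, f i ≤ ∑ i ∈ s, (a + m * (x i - c)) := sum_le_sum hf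
    _ = #s * a + m * ∑ i ∈ s, (x i - c) := by
      rw [sum_add_distrib, sum_const, nsmul_eq_mul, mul_sum]
    _ = #s * a := by rw [sum_deviation, mul_zero, add_zero]

lemma sq_mul_sub_le_tangent [CommRing R] [LinearOrder R] [IsOrderedRing R] {b c t : R}
    (h : b ≤ t + 2 * c) :
    t ^ 2 * (b - t) ≤ c ^ 2 * (b - c) + (2 * b * c - 3 * c ^ 2) * (t - c) := by
  rw [← sub_nonneg]
  calc 0 ≤ (t - c) ^ 2 * (t + 2 * c - b) := mul_nonneg (sq_nonneg _) (sub_nonneg.mpr h)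
    _ = c ^ 2 * (b - c) + (2 * b * c - 3 * c ^ 2) * (t - c) - t ^ 2 * (b - t) := by ring

end SupportingLine

theorem stmt_6_general {ι K : Type*} [Field K] [LinearOrder K] [IsStrictOrderedRing K]
    {s : Finset ι} {x : ι → K} {b c : K} (hc : c = (∑ i ∈ s, x i) / #s)
    (hb : ∀ i ∈ s, b ≤ x i + 2 * c) :
    ∑ i ∈ s, x i ^ 2 * (b - x i) ≤ #s * c ^ 2 * (b - c) := by
  have sum_eq : ∑ i ∈ s, x i = #s * c := by
    rw [hc, ← expect_eq_sum_div_card, card_mul_expect]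
  rw [mul_assoc]
  exact sum_le_card_mul_of_le_add_mul_sub sum_eq fun i hi ↦ sq_mul_sub_le_tangent (hb i hi)

/-- If `G` is a graph on `n` vertices with average degree `d ≥ n/2`, then
`∑_v d_v² (n − d_v) ≤ n d² (n − d)`. -/
theorem stmt_6 (n : ℕ) (G : SimpleGraph (Fin n)) (d : ℝ)
    (hd : d = (∑ v : Fin n, (G.degree v : ℝ)) / (n : ℝ))
    (hhalf : (n : ℝ) / 2 ≤ d) :
    ∑ v : Fin n, (G.degree v : ℝ) ^ 2 * ((n : ℝ) - G.degree v) ≤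
      (n : ℝ) * d ^ 2 * ((n : ℝ) - d) := by
  have n_le (v : Fin n) : (n : ℝ) ≤ G.degree v + 2 * d := by
    linarith [(G.degree v).cast_nonneg (α := ℝ)]
  simpa using stmt_6_general (s := univ) (by simpa using hd) fun v _ ↦ n_le v
end

section
/- Let 0 < γ < 1 and let f : ℝ → ℝ be convex on the interval [0,γ] and concave on the interval [γ,1]. Let n ≥ 1, let 0 ≤ D ≤ n, and let x_1, …, x_n ∈ [0,1] with x_1 + ⋯ + x_n = D. Then there exist a real number α with γ ≤ α ≤ 1 and y_1, …, y_n ∈ [0,1] with y_1 + ⋯ + y_n = D such that all but at most one of the y_i belong to {0, α} and ∑_{i=1}^n f(x_i) ≤ ∑_{i=1}^n f(y_i). -/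
open Finset
open scoped Classical

/-!
On `[a, γ]` convexity rewards pushing two values apart with their sum fixed, until one of them
reaches `a` or `γ`; once no such move is left, at most one value lies strictly between `a` and `γ`.
On `[γ, b]` concavity rewards replacing all values by their mean, which becomes `α`.
-/

section PairSpreading

theorem sum_sub_sum_eq_of_eq_off_pair {ι M : Type*} [Fintype ι] [AddCommGroup M] {u v : ι → M}
    {i j : ι} (hij : i ≠ j) (huv : ∀ k, k ≠ i ∧ k ≠ j → u k = v k) :
    ∑ k, u k - ∑ k, v k = (u i + u j) - (v i + v j) := by
  rw [← sum_sub_distrib, Fintype.sum_eq_add i j hij fun k hk ↦ sub_eq_zero.2 (huv k hk)]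
  abel

theorem add_le_add_of_convexOn_of_mem_segment {𝕜 E β : Type*} [Semiring 𝕜] [PartialOrder 𝕜]
    [AddCommGroup E] [Module 𝕜 E] [AddCommMonoid β] [PartialOrder β] [IsOrderedAddMonoid β]
    [Module 𝕜 β] {s : Set E} {f : E → β} (hf : ConvexOn 𝕜 s f) {u v c d : E} (hc : c ∈ s)
    (hd : d ∈ s) (hu : u ∈ segment 𝕜 c d) (huv : u + v = c + d) :
    f u + f v ≤ f c + f d := by
  obtain ⟨p, q, hp, hq, hpq, rfl⟩ := hu
  have hqp : q + p = 1 := add_comm q p ▸ hpq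
  have hv : v = q • c + p • d := by
    apply add_left_cancel (a := p • c + q • d)
    rw [huv, add_add_add_comm, ← add_smul, ← add_smul, hpq, hqp, one_smul, one_smul]
  calc f (p • c + q • d) + f v
      ≤ (p • f c + q • f d) + (q • f c + p • f d) :=
        add_le_add (hf.2 hc hd hp hq hpq) (hv ▸ hf.2 hc hd hq hp hqp)
    _ = f c + f d := by
        rw [add_add_add_comm, ← add_smul, ← add_smul, hpq, hqp, one_smul, one_smul]

variable {𝕜 β ι : Type*} [Field 𝕜] [LinearOrder 𝕜] [IsStrictOrderedRing 𝕜] [AddCommGroup β]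
  [PartialOrder β] [IsOrderedAddMonoid β] [Module 𝕜 β] {a γ : 𝕜} {f : 𝕜 → β}

theorem exists_endpoint_pair_add_le_of_convexOn (hf : ConvexOn 𝕜 (Set.Icc a γ) f) {u v : 𝕜}
    (hu : u ∈ Set.Icc a γ) (hv : v ∈ Set.Icc a γ) :
    ∃ c ∈ Set.Icc a γ, ∃ d ∈ Set.Icc a γ, (c = a ∨ d = γ) ∧ c + d = u + v ∧
      f u + f v ≤ f c + f d := by
  obtain ⟨hau, huγ⟩ := hu
  obtain ⟨hav, hvγ⟩ := hv
  suffices h : ∃ c d, a ≤ c ∧ c ≤ u ∧ u ≤ d ∧ d ≤ γ ∧ (c = a ∨ d = γ) ∧ c + d = u + v by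
    obtain ⟨c, d, hac, hcu, hud, hdγ, hend, hsum⟩ := h
    have hc : c ∈ Set.Icc a γ := ⟨hac, hcu.trans huγ⟩
    have hd : d ∈ Set.Icc a γ := ⟨hau.trans hud, hdγ⟩
    have hu_segment : u ∈ segment 𝕜 c d := by
      rw [segment_eq_Icc (hcu.trans hud)]
      exact ⟨hcu, hud⟩
    exact ⟨c, hc, d, hd, hend, hsum,
      add_le_add_of_convexOn_of_mem_segment hf hc hd hu_segment hsum.symm⟩
  rcases le_total (u + v) (a + γ) with h | h
  · exact ⟨a, u + v - a, le_rfl, hau, by linarith, by linarith, .inl rfl, by ring⟩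
  · exact ⟨u + v - γ, γ, by linarith, by linarith, huγ, le_rfl, .inr rfl, by ring⟩

variable [Fintype ι]

theorem exists_interior_ssubset_sum_le_of_convexOn (hf : ConvexOn 𝕜 (Set.Icc a γ) f) {x : ι → 𝕜}
    {i j : ι} (hij : i ≠ j) (hi : x i ∈ Set.Ioo a γ) (hj : x j ∈ Set.Ioo a γ) :
    ∃ y : ι → 𝕜, (∀ k, y k = x k ∨ y k ∈ Set.Icc a γ) ∧ ∑ k, y k = ∑ k, x k ∧
      ∑ k, f (x k) ≤ ∑ k, f (y k) ∧ {k | y k ∈ Set.Ioo a γ} ⊂ {k | x k ∈ Set.Ioo a γ} := by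
  obtain ⟨c, hc, d, hd, hend, hsum, hle⟩ := exists_endpoint_pair_add_le_of_convexOn hf
    (Set.Ioo_subset_Icc_self hi) (Set.Ioo_subset_Icc_self hj)
  obtain ⟨y, rfl, rfl, hyx⟩ : ∃ y : ι → 𝕜, y i = c ∧ y j = d ∧ ∀ k, k ≠ i ∧ k ≠ j → y k = x k :=
    ⟨Function.update (Function.update x i c) j d, by simp [hij], by simp,
      fun k hk ↦ by simp [hk.1, hk.2]⟩
  refine ⟨y, fun k ↦ ?_, ?_, ?_, fun k hk ↦ ?_, fun hsub ↦ ?_⟩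
  · grind
  · rw [← sub_eq_zero, sum_sub_sum_eq_of_eq_off_pair hij hyx, hsum, sub_self]
  · rw [← sub_nonneg, sum_sub_sum_eq_of_eq_off_pair hij fun k hk ↦ congrArg f (hyx k hk)]
    exact sub_nonneg.2 hle
  · by_cases hk_off : k ≠ i ∧ k ≠ j
    · have hyk : y k ∈ Set.Ioo a γ := hk
      rwa [hyx k hk_off] at hyk
    · obtain rfl | rfl : k = i ∨ k = j := by tauto
      exacts [hi, hj]
  · rcases hend with hya | hyγ
    · exact (hsub hi).1.ne' hya
    · exact (hsub hj).2.ne hyγ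

theorem exists_interior_subsingleton_sum_le_of_convexOn (hf : ConvexOn 𝕜 (Set.Icc a γ) f)
    (x : ι → 𝕜) :
    ∃ y : ι → 𝕜, (∀ k, y k = x k ∨ y k ∈ Set.Icc a γ) ∧ ∑ k, y k = ∑ k, x k ∧
      ∑ k, f (x k) ≤ ∑ k, f (y k) ∧ {k | y k ∈ Set.Ioo a γ}.Subsingleton := by
  obtain ⟨y, ⟨hy, hsum, hle⟩, hmin⟩ := exists_minimalFor_of_wellFoundedLT
    (fun y : ι → 𝕜 ↦ (∀ k, y k = x k ∨ y k ∈ Set.Icc a γ) ∧ ∑ k, y k = ∑ k, x k ∧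
      ∑ k, f (x k) ≤ ∑ k, f (y k))
    (fun y ↦ {k | y k ∈ Set.Ioo a γ}) ⟨x, fun _ ↦ .inl rfl, rfl, le_rfl⟩
  refine ⟨y, hy, hsum, hle, fun i hi j hj ↦ by_contra fun hij ↦ ?_⟩
  obtain ⟨z, hz, hzsum, hzle, hlt⟩ := exists_interior_ssubset_sum_le_of_convexOn hf hij hi hj
  have hzx : ∀ k, z k = x k ∨ z k ∈ Set.Icc a γ := fun k ↦
    (hz k).elim (fun hzy ↦ hzy ▸ hy k) .inr
  exact hlt.2 (hmin ⟨hzx, hzsum.trans hsum, hle.trans hzle⟩ hlt.1)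

end PairSpreading

section Averaging

variable {𝕜 E β ι : Type*} [Field 𝕜] [LinearOrder 𝕜] [IsStrictOrderedRing 𝕜] [AddCommGroup E]
  [Module 𝕜 E] [AddCommGroup β] [PartialOrder β] [IsOrderedAddMonoid β] [Module 𝕜 β]
  [IsStrictOrderedModule 𝕜 β] {s : Set E} {f : E → β}

theorem exists_card_nsmul_eq_sum_and_sum_le_of_concaveOn (hf : ConcaveOn 𝕜 s f) {t : Finset ι}
    (ht : t.Nonempty) {z : ι → E} (hz : ∀ i ∈ t, z i ∈ s) :
    ∃ m ∈ s, #t • m = ∑ i ∈ t, z i ∧ ∑ i ∈ t, f (z i) ≤ #t • f m := by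
  have hcard : (0 : 𝕜) < #t := by exact_mod_cast ht.card_pos
  have hweight : ∀ i ∈ t, 0 ≤ (#t : 𝕜)⁻¹ := fun _ _ ↦ inv_nonneg.2 hcard.le
  have hweight_sum : ∑ _i ∈ t, (#t : 𝕜)⁻¹ = 1 := by
    rw [sum_const, nsmul_eq_mul, mul_inv_cancel₀ hcard.ne']
  refine ⟨∑ i ∈ t, (#t : 𝕜)⁻¹ • z i, hf.1.sum_mem hweight hweight_sum hz, ?_, ?_⟩
  · rw [← Nat.cast_smul_eq_nsmul 𝕜, ← smul_sum, smul_inv_smul₀ hcard.ne']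
  · have hjensen := hf.le_map_sum hweight hweight_sum hz
    rwa [← smul_sum, inv_smul_le_iff_of_pos hcard, Nat.cast_smul_eq_nsmul] at hjensen

theorem exists_const_on_sum_le_of_concaveOn [Fintype ι] (hf : ConcaveOn 𝕜 s f) (hs : s.Nonempty)
    (z : ι → E) :
    ∃ m ∈ s, ∃ y : ι → E, (∀ i, z i ∈ s → y i = m) ∧ (∀ i, z i ∉ s → y i = z i) ∧
      ∑ i, y i = ∑ i, z i ∧ ∑ i, f (z i) ≤ ∑ i, f (y i) := by
  rcases ({i | z i ∈ s} : Finset ι).eq_empty_or_nonempty with hempty | hne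
  · obtain ⟨m, hm⟩ := hs
    have hz : ∀ i, z i ∉ s := by simpa [filter_eq_empty_iff] using hempty
    exact ⟨m, hm, z, fun i hi ↦ (hz i hi).elim, fun _ _ ↦ rfl, rfl, le_rfl⟩
  · obtain ⟨m, hm, hsum, hle⟩ := exists_card_nsmul_eq_sum_and_sum_le_of_concaveOn hf hne
      (z := z) fun i hi ↦ (mem_filter.1 hi).2
    refine ⟨m, hm, fun i ↦ if z i ∈ s then m else z i, fun _ hi ↦ if_pos hi,
      fun _ hi ↦ if_neg hi, ?_, ?_⟩
    · rw [sum_ite, sum_const, hsum, sum_filter_add_sum_filter_not]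
    · simp only [apply_ite f]
      rw [sum_ite, sum_const, ← sum_filter_add_sum_filter_not univ (fun i ↦ z i ∈ s)]
      gcongr

end Averaging

theorem stmt_7_general {𝕜 β ι : Type*} [Field 𝕜] [LinearOrder 𝕜] [IsStrictOrderedRing 𝕜]
    [AddCommGroup β] [PartialOrder β] [IsOrderedAddMonoid β] [Module 𝕜 β]
    [IsStrictOrderedModule 𝕜 β] [Fintype ι] [Nonempty ι] {a γ b : 𝕜} (haγ : a ≤ γ) (hγb : γ ≤ b)
    {f : 𝕜 → β} (hconv : ConvexOn 𝕜 (Set.Icc a γ) f) (hconc : ConcaveOn 𝕜 (Set.Icc γ b) f)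
    {x : ι → 𝕜} (hx : ∀ i, x i ∈ Set.Icc a b) :
    ∃ α : 𝕜, γ ≤ α ∧ α ≤ b ∧
      ∃ y : ι → 𝕜, (∀ i, y i ∈ Set.Icc a b) ∧ ∑ i, y i = ∑ i, x i ∧
        (∃ i₀ : ι, ∀ i, i ≠ i₀ → y i = a ∨ y i = α) ∧ ∑ i, f (x i) ≤ ∑ i, f (y i) := by
  obtain ⟨z, hzx, hzsum, hzle, hinterior⟩ :=
    exists_interior_subsingleton_sum_le_of_convexOn hconv x
  obtain ⟨α, ⟨hγα, hαb⟩, y, hyα, hyz, hysum, hyle⟩ :=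
    exists_const_on_sum_le_of_concaveOn hconc (Set.nonempty_Icc.2 hγb) z
  have hz : ∀ i, z i ∈ Set.Icc a b := fun i ↦
    (hzx i).elim (fun h ↦ h ▸ hx i) fun h ↦ Set.Icc_subset_Icc_right hγb h
  obtain ⟨i₀, hi₀⟩ : ∃ i₀, {i | z i ∈ Set.Ioo a γ} ⊆ {i₀} := by
    rcases hinterior.eq_empty_or_singleton with hempty | ⟨i₀, hi₀⟩
    exacts [⟨Classical.arbitrary ι, hempty ▸ Set.empty_subset _⟩, ⟨i₀, hi₀.subset⟩]
  refine ⟨α, hγα, hαb, y, fun i ↦ ?_, hysum.trans hzsum, ⟨i₀, fun i hi ↦ ?_⟩, hzle.trans hyle⟩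
  · by_cases hzi : z i ∈ Set.Icc γ b
    · exact hyα i hzi ▸ ⟨haγ.trans hγα, hαb⟩
    · exact hyz i hzi ▸ hz i
  · by_cases hzi : z i ∈ Set.Icc γ b
    · exact .inr (hyα i hzi)
    · have hlt : z i < γ := lt_of_not_ge fun hγz ↦ hzi ⟨hγz, (hz i).2⟩
      have hnot : ¬a < z i := fun haz ↦ hi (hi₀ ⟨haz, hlt⟩)
      exact .inl ((hyz i hzi).trans ((hz i).1.eq_of_not_lt hnot).symm)

/-- **Optimization lemma.**  If `f` is convex on `[0,γ]` and concave on `[γ,1]`, then any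
sum `∑ f(x_i)` with `x_i ∈ [0,1]` and `∑ x_i = D` is bounded by `∑ f(y_i)` for some
`y_i ∈ [0,1]` with `∑ y_i = D`, all but at most one of which lie in `{0, α}` for some
`α ∈ [γ, 1]`. -/
theorem stmt_7 (γ : ℝ) (hγ0 : 0 < γ) (hγ1 : γ < 1) (f : ℝ → ℝ)
    (hconv : ConvexOn ℝ (Set.Icc (0 : ℝ) γ) f)
    (hconc : ConcaveOn ℝ (Set.Icc γ 1) f)
    (n : ℕ) (hn : 1 ≤ n) (D : ℝ) (hD0 : 0 ≤ D) (hDn : D ≤ n)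
    (x : Fin n → ℝ) (hx : ∀ i, x i ∈ Set.Icc (0 : ℝ) 1) (hsum : ∑ i, x i = D) :
    ∃ α : ℝ, γ ≤ α ∧ α ≤ 1 ∧
      ∃ y : Fin n → ℝ, (∀ i, y i ∈ Set.Icc (0 : ℝ) 1) ∧ (∑ i, y i = D) ∧
        (∃ i₀ : Fin n, ∀ i, i ≠ i₀ → y i = 0 ∨ y i = α) ∧
        ∑ i, f (x i) ≤ ∑ i, f (y i) := by
  subst hsum
  have : Nonempty (Fin n) := Fin.pos_iff_nonempty.1 hn
  exact stmt_7_general hγ0.le hγ1.le hconv hconc hx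
end

section
/- Let s ≥ 1 be an integer and let G be any finite simple graph on n vertices. Then D_s(G) ≤ ((2s)^{2s} / (2s+1)^{2s+1}) · n^{2s+2}. -/
open Finset SimpleGraph
open scoped Classical

/-- `Dstar s G` is the number of ordered `(2s+2)`-tuples
`(v₁,…,v_s, v, u, u₁,…,u_s)` of pairwise distinct vertices of `G` such that
`v vᵢ` and `u uⱼ` are edges for all `i, j`, and `uv` is not an edge
(labeled copies of the alternating double star `D(s)`). -/
noncomputable def Dstar (s : ℕ) {n : ℕ} (G : SimpleGraph (Fin n)) : ℕ :=
  Finset.card <|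
    (Finset.univ : Finset ((Fin s → Fin n) × Fin n × Fin n × (Fin s → Fin n))).filter
      fun p =>
        (Function.Injective fun i : Fin s ⊕ Fin 2 ⊕ Fin s =>
          Sum.elim p.1
            (Sum.elim (fun j : Fin 2 => if j = 0 then p.2.1 else p.2.2.1) p.2.2.2) i) ∧
        (∀ i, G.Adj p.2.1 (p.1 i)) ∧ (∀ j, G.Adj p.2.2.1 (p.2.2.2 j)) ∧
        ¬ G.Adj p.2.1 p.2.2.1

/-!
Dropping the distinctness of the vertices, the tuples with centres `v` and `u` number at most
`d(v) ^ s * d(u) ^ s`. Summing `2 d(v) ^ s d(u) ^ s ≤ d(v) ^ (2s) + d(u) ^ (2s)` over the symmetric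
set of non-adjacent ordered pairs decouples the two centres and leaves
`∑ v, d(v) ^ (2s) * (n - d(v))`, in which every term is maximal at `d(v) = 2s n / (2s + 1)`.
-/

lemma pow_mul_le_div_mul_add_pow {K : Type*} [Field K] [LinearOrder K] [IsStrictOrderedRing K]
    {x y : K} (hx : 0 ≤ x) (hy : 0 ≤ y) (m : ℕ) :
    x ^ m * y ≤ (m : K) ^ m / (m + 1 : K) ^ (m + 1) * (x + y) ^ (m + 1) := by
  rcases m.eq_zero_or_pos with rfl | hm
  · simpa using hx
  -- The increment `m * y - x` vanishes exactly in the equality case `x = m * y`.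
  have bernoulli := pow_add_mul_le_add_pow (a := (m + 1) * x) (b := m * y - x) (by positivity)
    (by linarith [show 0 ≤ (2 * m + 1) * x + m * y by positivity]) (m + 1)
  rw [Nat.add_sub_cancel] at bernoulli
  push_cast at bernoulli
  have scaled : m * ((m + 1) ^ (m + 1) * (x ^ m * y)) ≤ m * (m ^ m * (x + y) ^ (m + 1)) := by
    calc
      m * ((m + 1) ^ (m + 1) * (x ^ m * y)) =
          ((m + 1) * x) ^ (m + 1) + (m + 1) * ((m + 1) * x) ^ m * (m * y - x) := by
        rw [mul_pow, mul_pow]; ring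
      _ ≤ ((m + 1) * x + (m * y - x)) ^ (m + 1) := bernoulli
      _ = (m * (x + y)) ^ (m + 1) := by ring
      _ = m * (m ^ m * (x + y) ^ (m + 1)) := by rw [mul_pow]; ring
  rw [div_mul_eq_mul_div, le_div_iff₀' (by positivity)]
  exact le_of_mul_le_mul_left scaled (by positivity)

lemma sum_sum_filter_mul_le_sum_sq_mul_card {R α : Type*} [CommRing R] [LinearOrder R]
    [IsStrictOrderedRing R] [Fintype α] (r : α → α → Prop) [DecidableRel r] [Std.Symm r]
    (f : α → R) :
    ∑ a, ∑ b with r a b, f a * f b ≤ ∑ a, f a ^ 2 * #{b | r a b} := by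
  have sum_sq_right : ∑ a, ∑ b with r a b, f b ^ 2 = ∑ a, ∑ b with r a b, f a ^ 2 :=
    sum_comm' fun a b => by simp [Std.Symm.iff (r := r) a b]
  have doubled : 2 * ∑ a, ∑ b with r a b, f a * f b ≤ 2 * ∑ a, ∑ b with r a b, f a ^ 2 := by
    calc
      2 * ∑ a, ∑ b with r a b, f a * f b = ∑ a, ∑ b with r a b, 2 * f a * f b := by
        simp only [mul_sum, mul_assoc]
      _ ≤ ∑ a, ∑ b with r a b, (f a ^ 2 + f b ^ 2) := by
        gcongr; exact two_mul_le_add_sq _ _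
      _ = 2 * ∑ a, ∑ b with r a b, f a ^ 2 := by
        simp only [sum_add_distrib, sum_sq_right, two_mul]
  simpa [mul_comm] using le_of_mul_le_mul_left doubled two_pos

section Graph

variable {V : Type*} [Fintype V] (G : SimpleGraph V)

lemma degree_add_card_filter_not_adj (v : V) :
    G.degree v + #{u | ¬ G.Adj v u} = Fintype.card V := by
  rw [← G.card_neighborFinset_eq_degree, G.neighborFinset_eq_filter,
    card_filter_add_card_filter_not, card_univ]

lemma sum_nonadj_degree_pow_mul_degree_pow_le {K : Type*} [Field K] [LinearOrder K]
    [IsStrictOrderedRing K] (s : ℕ) :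
    ∑ v, ∑ u with ¬ G.Adj v u, (G.degree v : K) ^ s * (G.degree u : K) ^ s ≤
      (2 * s : K) ^ (2 * s) / (2 * s + 1 : K) ^ (2 * s + 1) *
        (Fintype.card V : K) ^ (2 * s + 2) := by
  have : Std.Symm fun v u => ¬ G.Adj v u := ⟨fun _ _ => mt G.adj_symm⟩
  have card_eq (v : V) : (G.degree v : K) + #{u | ¬ G.Adj v u} = Fintype.card V :=
    mod_cast degree_add_card_filter_not_adj G v
  calc
    ∑ v, ∑ u with ¬ G.Adj v u, (G.degree v : K) ^ s * (G.degree u : K) ^ s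
    _ ≤ ∑ v, ((G.degree v : K) ^ s) ^ 2 * #{u | ¬ G.Adj v u} :=
      sum_sum_filter_mul_le_sum_sq_mul_card (fun v u => ¬ G.Adj v u) _
    _ = ∑ v, (G.degree v : K) ^ (2 * s) * #{u | ¬ G.Adj v u} := by
      simp only [← pow_mul, mul_comm s 2]
    _ ≤ ∑ _v : V, (2 * s : K) ^ (2 * s) / (2 * s + 1 : K) ^ (2 * s + 1) *
          (Fintype.card V : K) ^ (2 * s + 1) := by
      refine sum_le_sum fun v _ => ?_
      simpa [card_eq] using pow_mul_le_div_mul_add_pow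
        (Nat.cast_nonneg (α := K) (G.degree v)) (Nat.cast_nonneg #{u | ¬ G.Adj v u}) (2 * s)
    _ = (2 * s : K) ^ (2 * s) / (2 * s + 1 : K) ^ (2 * s + 1) *
          (Fintype.card V : K) ^ (2 * s + 2) := by
      rw [sum_const, card_univ, nsmul_eq_mul]
      ring

end Graph

lemma Dstar_le_sum_nonadj_degree_pow_mul_degree_pow (s : ℕ) {n : ℕ} (G : SimpleGraph (Fin n)) :
    Dstar s G ≤ ∑ v, ∑ u with ¬ G.Adj v u, G.degree v ^ s * G.degree u ^ s := by
  let stars (v : Fin n) : Finset (Fin s → Fin n) := Fintype.piFinset fun _ => G.neighborFinset v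
  have card_stars (v : Fin n) : #(stars v) = G.degree v ^ s := by simp [stars]
  calc
    Dstar s G ≤ #(univ.sigma fun v => ({u | ¬ G.Adj v u} : Finset (Fin n)).sigma fun u =>
        stars v ×ˢ stars u) := by
      refine card_le_card_of_injOn (fun p => ⟨p.2.1, p.2.2.1, p.1, p.2.2.2⟩) ?_ ?_
      · rintro ⟨f, v, u, g⟩ hp
        obtain ⟨-, hf, hg, huv⟩ := (mem_filter.1 hp).2
        simpa [stars] using ⟨huv, hf, hg⟩
      · rintro ⟨f, v, u, g⟩ - ⟨f', v', u', g'⟩ - h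
        simp_all
    _ = ∑ v, ∑ u with ¬ G.Adj v u, G.degree v ^ s * G.degree u ^ s := by
      simp only [card_sigma, card_product, card_stars]

/-- For every integer `s ≥ 1` and every graph `G` on `n` vertices,
`D_s(G) ≤ ((2s)^{2s} / (2s+1)^{2s+1}) n^{2s+2}`. -/
theorem stmt_9 (s : ℕ) (hs : 1 ≤ s) (n : ℕ) (G : SimpleGraph (Fin n)) :
    (Dstar s G : ℝ) ≤
      ((2 * s : ℝ) ^ (2 * s) / (2 * s + 1 : ℝ) ^ (2 * s + 1)) * (n : ℝ) ^ (2 * s + 2) := by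
  calc
    (Dstar s G : ℝ)
    _ ≤ ∑ v, ∑ u with ¬ G.Adj v u, (G.degree v : ℝ) ^ s * (G.degree u : ℝ) ^ s :=
      mod_cast Dstar_le_sum_nonadj_degree_pow_mul_degree_pow s G
    _ ≤ ((2 * s : ℝ) ^ (2 * s) / (2 * s + 1 : ℝ) ^ (2 * s + 1)) * (n : ℝ) ^ (2 * s + 2) := by
      simpa only [Fintype.card_fin] using sum_nonadj_degree_pow_mul_degree_pow_le G (K := ℝ) s
end

section
/- Let s ≥ 1 be an integer and let G be a finite simple graph on n vertices whose average degree d = 2m/n (where m is the number of edges) satisfies d ≥ (1 − 1/(2s))·n. Then D_s(G) ≤ (n − d) · n · d^{2s}. -/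
open Finset SimpleGraph
open scoped Classical

/-!
Counting the leaves of a double star with repetition allowed bounds `Dstar s G` by the sum of
`deg(v) ^ s * deg(u) ^ s` over ordered pairs of distinct non-adjacent vertices. The Laplacian of
the complement is positive semidefinite, so this is at most the sum of `f (deg v)` over all
vertices, where `f x = (n - 1 - x) * x ^ (2 * s)`. On `[0, n - 1]` the function `f` is first convex
and then concave, and `(1 - 1 / (2 * s)) * (n - 1)` is the point whose tangent line passes through
the origin; from there on, every tangent line lies above the graph of `f`. Summing the tangent line
at the average degree over all vertices removes its linear term.
-/

section TangentLine

variable {R : Type*} [CommRing R] [LinearOrder R] [IsStrictOrderedRing R]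

lemma sub_mul_pow_le_tangent {N d x : R} {k : ℕ} (hk : 2 ≤ k) (hx : 0 ≤ x) (hd : 0 ≤ d)
    (hN : k * (N - d) ≤ N) :
    (N - x) * x ^ k ≤
      (N - d) * d ^ k + (k * N * d ^ (k - 1) - (k + 1) * d ^ k) * (x - d) := by
  obtain ⟨m, rfl⟩ : ∃ m, k = m + 1 := ⟨k - 1, by lia⟩
  have tangent_at_d : 0 ≤ x ^ (m + 1) - (d ^ (m + 1) + (m + 1) * d ^ m * (x - d)) := by
    simpa using pow_add_mul_le_add_pow hd (b := x - d) (by linarith) (m + 1)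
  have tangent_at_x : 0 ≤ d ^ (m + 1) - (x ^ (m + 1) + (m + 1) * x ^ m * (d - x)) := by
    simpa using pow_add_mul_le_add_pow hx (b := d - x) (by linarith) (m + 1)
  have hm : (0 : R) < m := by exact_mod_cast (by lia : 0 < m)
  simp only [Nat.cast_add, Nat.cast_one, add_tsub_cancel_right] at hN ⊢
  refine le_of_mul_le_mul_left (sub_nonneg.mp ?_) hm
  calc
    0 ≤ x * (d ^ (m + 1) - (x ^ (m + 1) + (m + 1) * x ^ m * (d - x))) +
          (N - (m + 1) * (N - d)) *
            (x ^ (m + 1) - (d ^ (m + 1) + (m + 1) * d ^ m * (x - d))) :=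
      add_nonneg (mul_nonneg hx tangent_at_x) (mul_nonneg (sub_nonneg.mpr hN) tangent_at_d)
    _ = _ := by ring

lemma sum_sub_mul_pow_le_of_sum_eq {ι : Type*} {t : Finset ι} {x : ι → R} {N d : R} {k : ℕ}
    (hk : 2 ≤ k) (hx : ∀ i ∈ t, 0 ≤ x i) (hd : 0 ≤ d) (hN : k * (N - d) ≤ N)
    (hsum : ∑ i ∈ t, x i = #t * d) :
    ∑ i ∈ t, (N - x i) * x i ^ k ≤ #t * ((N - d) * d ^ k) := by
  have sum_deviation : ∑ i ∈ t, (x i - d) = 0 := by simp [hsum]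
  calc
    ∑ i ∈ t, (N - x i) * x i ^ k
      ≤ ∑ i ∈ t, ((N - d) * d ^ k +
          (k * N * d ^ (k - 1) - (k + 1) * d ^ k) * (x i - d)) :=
        sum_le_sum fun i hi => sub_mul_pow_le_tangent hk (hx i hi) hd hN
    _ = #t * ((N - d) * d ^ k) := by
        rw [sum_add_distrib, sum_const, nsmul_eq_mul, ← mul_sum, sum_deviation, mul_zero,
          add_zero]

end TangentLine

section Degrees

variable {V : Type*} [Fintype V] (G : SimpleGraph V) [DecidableRel G.Adj]

lemma sum_sum_neighborFinset_mul_le {R : Type*} [Field R] [LinearOrder R] [IsStrictOrderedRing R]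
    (f : V → R) :
    ∑ v, ∑ u ∈ G.neighborFinset v, f v * f u ≤ ∑ v, G.degree v * f v ^ 2 := by
  let : StarRing R := starRingOfComm
  have : TrivialStar R := ⟨fun _ => rfl⟩
  have laplacian_nonneg := (G.posSemidef_lapMatrix R).dotProduct_mulVec_nonneg f
  simp only [star_trivial, dotProduct, lapMatrix_mulVec_apply, mul_sub, sum_sub_distrib,
    sub_nonneg, mul_sum] at laplacian_nonneg
  exact laplacian_nonneg.trans_eq (sum_congr rfl fun v _ => by ring)

lemma cast_degree_compl [DecidableEq V] {R : Type*} [AddGroupWithOne R] (v : V) :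
    (Gᶜ.degree v : R) = Fintype.card V - 1 - G.degree v := by
  have := G.degree_lt_card_verts v
  rw [degree_compl, Nat.cast_sub (by lia), Nat.cast_sub (by lia), Nat.cast_one]

lemma sum_degrees_eq_card_mul_average {K : Type*} [Field K] [CharZero K] :
    ∑ v, (G.degree v : K) = Fintype.card V * (2 * #G.edgeFinset / Fintype.card V) := by
  have handshake : ∑ v, (G.degree v : K) = 2 * #G.edgeFinset := by
    exact_mod_cast G.sum_degrees_eq_twice_card_edges
  rw [handshake, mul_div_cancel_of_imp']
  intro card_eq_zero
  have : IsEmpty V := Fintype.card_eq_zero_iff.mp (by exact_mod_cast card_eq_zero)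
  simp [← handshake]

end Degrees

section DoubleStar

variable (s : ℕ) {n : ℕ} (G : SimpleGraph (Fin n))

lemma Dstar_le_sum_compl_neighborFinset :
    Dstar s G ≤ ∑ v, ∑ u ∈ Gᶜ.neighborFinset v, G.degree v ^ s * G.degree u ^ s := by
  let leaves (v : Fin n) : Finset (Fin s → Fin n) := Fintype.piFinset fun _ => G.neighborFinset v
  calc
    Dstar s G
      ≤ #(univ.sigma fun v => (Gᶜ.neighborFinset v).sigma fun u => leaves v ×ˢ leaves u) := by
        refine card_le_card_of_injOn (fun p => ⟨p.2.1, p.2.2.1, p.1, p.2.2.2⟩) ?_ ?_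
        · intro ⟨a, v, u, b⟩ hp
          obtain ⟨hinj, hva, hub, hvu⟩ := (mem_filter.mp hp).2
          have hne : v ≠ u := by
            simpa using hinj.ne (a₁ := .inr (.inl 0)) (a₂ := .inr (.inl 1)) (by simp)
          simpa [leaves, hne, hvu] using And.intro hva hub
        · rintro ⟨a, v, u, b⟩ - ⟨a', v', u', b'⟩ - h
          simp_all
    _ = ∑ v, ∑ u ∈ Gᶜ.neighborFinset v, G.degree v ^ s * G.degree u ^ s := by
        simp [leaves, card_sigma]

lemma Dstar_le_sum_sub_degree_mul_degree_pow :
    (Dstar s G : ℝ) ≤ ∑ v, ((n : ℝ) - 1 - G.degree v) * (G.degree v : ℝ) ^ (2 * s) := by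
  calc
    (Dstar s G : ℝ)
      ≤ ∑ v, ∑ u ∈ Gᶜ.neighborFinset v, (G.degree v : ℝ) ^ s * (G.degree u : ℝ) ^ s := by
        exact_mod_cast Dstar_le_sum_compl_neighborFinset s G
    _ ≤ ∑ v, (Gᶜ.degree v : ℝ) * ((G.degree v : ℝ) ^ s) ^ 2 :=
        sum_sum_neighborFinset_mul_le Gᶜ _
    _ = ∑ v, ((n : ℝ) - 1 - G.degree v) * (G.degree v : ℝ) ^ (2 * s) := by
        simp only [cast_degree_compl, Fintype.card_fin, ← pow_mul, mul_comm s 2]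

end DoubleStar

theorem stmt_10_general (s : ℕ) (hs : 1 ≤ s) (n : ℕ) (G : SimpleGraph (Fin n)) (d : ℝ)
    (hd : d = 2 * (G.edgeFinset.card : ℝ) / (n : ℝ))
    (hdense : (1 - 1 / (2 * s : ℝ)) * ((n : ℝ) - 1) ≤ d) :
    (Dstar s G : ℝ) ≤ ((n : ℝ) - 1 - d) * (n : ℝ) * d ^ (2 * s) := by
  have hd_nonneg : 0 ≤ d := by rw [hd]; positivity
  have hN : ((2 * s : ℕ) : ℝ) * ((n : ℝ) - 1 - d) ≤ (n : ℝ) - 1 := by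
    have hs_pos : (0 : ℝ) < 2 * s := by positivity
    rw [Nat.cast_mul, Nat.cast_two, ← le_div_iff₀' hs_pos]
    linear_combination hdense
  have hsum : ∑ v, (G.degree v : ℝ) = #(univ : Finset (Fin n)) * d := by
    rw [sum_degrees_eq_card_mul_average, Fintype.card_fin, card_fin, hd]
  calc
    (Dstar s G : ℝ) ≤ ∑ v, ((n : ℝ) - 1 - G.degree v) * (G.degree v : ℝ) ^ (2 * s) :=
      Dstar_le_sum_sub_degree_mul_degree_pow s G
    _ ≤ #(univ : Finset (Fin n)) * (((n : ℝ) - 1 - d) * d ^ (2 * s)) :=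
      sum_sub_mul_pow_le_of_sum_eq (by lia) (fun v _ => Nat.cast_nonneg _) hd_nonneg hN hsum
    _ = ((n : ℝ) - 1 - d) * n * d ^ (2 * s) := by rw [card_fin]; ring

/-- For `s ≥ 1` and a graph `G` on `n` vertices with average degree
`d = 2m/n ≥ (1 − 1/(2s)) n`, we have `D_s(G) ≤ (n − d) n d^{2s}`. -/
theorem stmt_10 (s : ℕ) (hs : 1 ≤ s) (n : ℕ) (G : SimpleGraph (Fin n)) (d : ℝ)
    (hd : d = 2 * (G.edgeFinset.card : ℝ) / (n : ℝ))
    (hdense : (1 - 1 / (2 * s : ℝ)) * (n : ℝ) ≤ d) :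
    (Dstar s G : ℝ) ≤ ((n : ℝ) - d) * (n : ℝ) * d ^ (2 * s) := by
  have h_inv : 1 / (2 * s : ℝ) ≤ 1 :=
    (div_le_one (by positivity)).mpr (by exact_mod_cast (by lia : 1 ≤ 2 * s))
  exact (stmt_10_general s hs n G d hd (by linarith)).trans
    (by gcongr; exacts [(even_two_mul s).pow_nonneg d, by linarith])
end
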